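/- arXiv:1804.00449 — 3 statements merged into one kernel-verified Lean document; each statement's English description precedes it below -/
import Mathlib

section
/- Let T be a nice triangulation of Δ^3 (the case n = 4) such that the supporting faces of any two adjacent vertices of T are comparable by inclusion. Let Λ be a nice labeling of the vertices of T with nonempty subsets of [4] such that for every vertex v, either Λ(v) = J_v or Λ(v) is a singleton {ℓ} with ℓ ∉ J_v. Then there exists a 3-dimensional simplex τ ∈ T with vertex set {u_1, u_2, u_3, u_4} and pairwise distinct elements ℓ_1, ℓ_2, ℓ_3, ℓ_4 of [4] such that ℓ_k ∈ Λ(u_k) for every k ∈ {1,2,3,4}. -/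
/-!
Count modulo 2. Each label `L` receives a weight `wt L` in `(ℤ/2)^4` supported in `L` whose
coordinates add up to 1: the indicator of `L` if `L` has one or three elements, and a basis vector
`e_ℓ` with `ℓ ∈ L` if `L` has two elements. If the weights of the vertices of a tetrahedron have
nonzero determinant (modulo 2, that is, nonzero permanent), then some term of the expansion is
nonzero, and it assigns distinct labels to the four vertices (`exists_labeling`). So it suffices
that the sum of these determinants over all tetrahedra is 1.

Since the weights lie on an affine hyperplane, the determinant of a tetrahedron is the sum of the
determinants `det3` of its four triangles (`sum_cochain2`), and Stokes' theorem modulo 2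
(`Triangulation.sum_coboundary`) turns the total into a sum of `det3` over the triangles of the
boundary. The maps `r^j` carry the triangles of the `0`-facet bijectively onto those of the
`j`-facet (`Triangulation.IsNice.sum_cells_image`), so the total is a sum over the `0`-facet. There
the four contributions of a triangle add up to the coboundary of an edge function `det2`
(`sum_det3`, a finite check on labels using that the labels of adjacent vertices are compatible).
The same step applied to the `0`-facet, whose three sides are identified with the edge from `e_2` to
`e_3`, replaces `det2` by the coboundary of the vertex function `det1` (`sum_det2`), and a last one
leaves the value at the two endpoints, which is 1 (`sum_det1`). These finite checks
depend on the choice made for two-element labels: it is the minimum, except for `{0, 3}`, where it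
is the maximum.

Stokes' theorem rests on the fact that a codimension-one simplex of the triangulation induced on a
face of `Δ` lies in one cell if it is on the boundary of that face and in two cells otherwise
(`Triangulation.card_apices_boundary`, `Triangulation.card_apices_interior`).
-/

open scoped Classical
noncomputable section

/-- The permutation ρ^j of `Fin n` (0-indexed): it sends 0 to j, i to i-1 for 1 ≤ i ≤ j,
and fixes i for i > j. -/
def rho {n : ℕ} (j : Fin n) : Equiv.Perm (Fin n) := (Fin.cycleRange j)⁻¹

/-- The linear self-map r^j of ℝ^n, defined by r^j(e_i) = e_{ρ^j(i)}. -/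
def rmap {n : ℕ} (j : Fin n) (x : Fin n → ℝ) : Fin n → ℝ := fun i => x ((rho j).symm i)

/-- A triangulation of the standard simplex Δ^{n-1}: a finite geometric simplicial complex
consisting of (n-1)-dimensional simplices and their faces, whose underlying space is
the standard simplex. -/
structure Triangulation (n : ℕ) where
  complex : Geometry.SimplicialComplex ℝ (Fin n → ℝ)
  finite : complex.faces.Finite
  space_eq : complex.space = stdSimplex ℝ (Fin n)
  pure : ∀ σ ∈ complex.faces, ∃ τ ∈ complex.faces, σ ⊆ τ ∧ τ.card = n

/-- A triangulation is nice if r^j(σ) is a face for every j and every face σ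
contained in the 1̂-facet. -/
def Triangulation.IsNice {n : ℕ} [NeZero n] (T : Triangulation n) : Prop :=
  ∀ j : Fin n, ∀ σ ∈ T.complex.faces, (∀ x ∈ σ, x 0 = 0) →
    σ.image (rmap j) ∈ T.complex.faces

/-- A labeling Λ of the vertices of T by subsets of [n] is nice if
Λ(r^j(v)) = ρ^j(Λ(v)) for every j and every vertex v in the 1̂-facet. -/
def NiceLabeling {n : ℕ} [NeZero n] (T : Triangulation n) (Λ : (Fin n → ℝ) → Finset (Fin n)) : Prop :=
  ∀ j : Fin n, ∀ v ∈ T.complex.vertices, v 0 = 0 →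
    Λ (rmap j v) = (Λ v).image (rho j)

/-- J_x: the set of coordinates of x that vanish, i.e. the set of j such that x lies
on the ĵ-facet. -/
def Jset {n : ℕ} (x : Fin n → ℝ) : Finset (Fin n) := Finset.univ.filter (fun i => x i = 0)

/-! ### Faces of a triangulation and coordinate subspaces -/

/-- The coordinate subspace of the vectors supported on `S`; it meets the standard simplex in
the face spanned by the `e_i`, `i ∈ S`. -/
def coordSpan {n : ℕ} (S : Finset (Fin n)) : Submodule ℝ (Fin n → ℝ) :=
  Submodule.span ℝ ((Pi.basisFun ℝ (Fin n)) '' (S : Set (Fin n)))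

lemma mem_coordSpan {n : ℕ} {S : Finset (Fin n)} {x : Fin n → ℝ} :
    x ∈ coordSpan S ↔ ∀ i, i ∉ S → x i = 0 := by
  rw [coordSpan, Module.Basis.mem_span_image]
  constructor
  · intro h i hi
    by_contra hx
    exact hi (h (by simpa using hx))
  · intro h i hi
    by_contra hS
    simp at hi
    exact hi (h i hS)

lemma finrank_coordSpan {n : ℕ} (S : Finset (Fin n)) :
    Module.finrank ℝ (coordSpan S) = S.card := by
  have h : ((Pi.basisFun ℝ (Fin n)) '' (S : Set (Fin n)))
      = ((S.image (Pi.basisFun ℝ (Fin n)) : Finset (Fin n → ℝ)) : Set (Fin n → ℝ)) := by simp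
  rw [coordSpan, h, finrank_span_finset_eq_card, Finset.card_image_of_injective]
  · exact (Pi.basisFun ℝ (Fin n)).injective
  · rw [← h]
    exact (Pi.basisFun ℝ (Fin n)).linearIndependent.linearIndepOn_id.mono (by
      rintro _ ⟨i, -, rfl⟩; exact ⟨i, rfl⟩)

lemma coordSpan_mono {n : ℕ} {S S' : Finset (Fin n)} (h : S ⊆ S') :
    coordSpan S ≤ coordSpan S' := by
  intro x hx
  rw [mem_coordSpan] at hx ⊢
  exact fun i hi => hx i (fun h' => hi (h h'))

namespace Triangulation

variable {n : ℕ} (T : Triangulation n)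

lemma mem_simplex {σ : Finset (Fin n → ℝ)} (hσ : σ ∈ T.complex.faces) {x : Fin n → ℝ}
    (hx : x ∈ σ) : x ∈ stdSimplex ℝ (Fin n) := by
  rw [← T.space_eq]
  exact T.complex.subset_space hσ hx

/-- The affinely independent vertices of a face are linearly independent, because they lie on
the hyperplane `∑ x_i = 1`, which misses the origin. -/
lemma linearIndep {σ : Finset (Fin n → ℝ)} (hσ : σ ∈ T.complex.faces) :
    LinearIndepOn ℝ id (σ : Set (Fin n → ℝ)) := by
  rw [linearIndepOn_finset_iff]
  intro f hf x hx
  have h1 : ∑ y ∈ σ, f y = 0 := by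
    have := congrArg (fun v : Fin n → ℝ => ∑ i, v i) hf
    simp only [Finset.sum_apply, Pi.smul_apply, id, smul_eq_mul, Pi.zero_apply,
      Finset.sum_const_zero] at this
    rw [Finset.sum_comm] at this
    rw [← this]
    refine Finset.sum_congr rfl fun y hy => ?_
    rw [← Finset.mul_sum, (T.mem_simplex hσ hy).2, mul_one]
  have h2 := T.complex.indep hσ
  rw [affineIndependent_iff] at h2
  refine h2 Finset.univ (fun y => f y) ?_ ?_ ⟨x, hx⟩ (Finset.mem_univ _)
  · rw [← h1]; exact Finset.sum_coe_sort σ f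
  · rw [← hf]; exact Finset.sum_coe_sort σ (fun y => f y • y)

lemma finrank_span {σ : Finset (Fin n → ℝ)} (hσ : σ ∈ T.complex.faces) :
    Module.finrank ℝ (Submodule.span ℝ (σ : Set (Fin n → ℝ))) = σ.card :=
  finrank_span_finset_eq_card (T.linearIndep hσ)

lemma card_le {σ : Finset (Fin n → ℝ)} (hσ : σ ∈ T.complex.faces) {S : Finset (Fin n)}
    (hS : ∀ x ∈ σ, x ∈ coordSpan S) : σ.card ≤ S.card := by
  rw [← T.finrank_span hσ, ← finrank_coordSpan S]
  exact Submodule.finrank_mono (Submodule.span_le.2 hS)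

lemma span_eq {σ : Finset (Fin n → ℝ)} (hσ : σ ∈ T.complex.faces) {S : Finset (Fin n)}
    (hS : ∀ x ∈ σ, x ∈ coordSpan S) (hc : σ.card = S.card) :
    Submodule.span ℝ (σ : Set (Fin n → ℝ)) = coordSpan S := by
  refine Submodule.eq_of_le_of_finrank_le (Submodule.span_le.2 hS) ?_
  rw [T.finrank_span hσ, finrank_coordSpan, hc]

lemma notMem_span {σ : Finset (Fin n → ℝ)} {w : Fin n → ℝ} (hw : w ∉ σ)
    (h : insert w σ ∈ T.complex.faces) :
    w ∉ Submodule.span ℝ (σ : Set (Fin n → ℝ)) := by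
  have h1 := T.linearIndep h
  rw [Finset.coe_insert, linearIndepOn_id_insert (by simpa using hw)] at h1
  exact h1.2

/-- If a point with positive weights on all vertices of the face `σ` lies in the face `τ`,
then `σ` is a subface of `τ`. -/
lemma subset_of_pos {σ τ : Finset (Fin n → ℝ)} (hσ : σ ∈ T.complex.faces)
    (hτ : τ ∈ T.complex.faces) {w : (Fin n → ℝ) → ℝ} (hw : ∀ x ∈ σ, 0 < w x)
    (hsum : ∑ x ∈ σ, w x = 1) (hp : ∑ x ∈ σ, w x • x ∈ convexHull ℝ (τ : Set (Fin n → ℝ))) :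
    σ ⊆ τ := by
  have hpσ : ∑ x ∈ σ, w x • x ∈ convexHull ℝ (σ : Set (Fin n → ℝ)) :=
    Finset.mem_convexHull'.2 ⟨w, fun x hx => (hw x hx).le, hsum, rfl⟩
  have h := T.complex.inter_subset_convexHull hσ hτ ⟨hpσ, hp⟩
  rw [← Finset.coe_inter] at h
  obtain ⟨w', -, -, h'⟩ := Finset.mem_convexHull'.1 h
  have hind := linearIndepOn_finset_iff.1 (T.linearIndep hσ)
    (fun x => w x - if x ∈ τ then w' x else 0) (by
      simp only [id, sub_smul, Finset.sum_sub_distrib, ite_smul, zero_smul]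
      rw [← Finset.sum_filter, Finset.filter_mem_eq_inter, h', sub_self])
  intro x hx
  by_contra hxτ
  have := hind x hx
  simp only [hxτ, if_false, sub_zero] at this
  exact (hw x hx).ne' this

/-- A point of a simplex lying in a face of `Δ` is carried by the vertices lying in that face. -/
lemma mem_convexHull_filter {τ : Finset (Fin n → ℝ)} (hτ : τ ∈ T.complex.faces)
    {S : Finset (Fin n)} {x : Fin n → ℝ} (hx : x ∈ convexHull ℝ (τ : Set (Fin n → ℝ)))
    (hS : x ∈ coordSpan S) :
    x ∈ convexHull ℝ ((τ.filter (fun y => y ∈ coordSpan S) : Finset (Fin n → ℝ)) :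
      Set (Fin n → ℝ)) := by
  obtain ⟨w, hw, hsum, rfl⟩ := Finset.mem_convexHull'.1 hx
  have key : ∀ y ∈ τ, y ∉ coordSpan S → w y = 0 := by
    intro y hy hyS
    rw [mem_coordSpan] at hyS hS
    push Not at hyS
    obtain ⟨i, hi, hyi⟩ := hyS
    have h0 := hS i hi
    simp only [Finset.sum_apply, Pi.smul_apply, smul_eq_mul] at h0
    rw [Finset.sum_eq_zero_iff_of_nonneg
      (fun z hz => mul_nonneg (hw z hz) ((T.mem_simplex hτ hz).1 i))] at h0
    exact (mul_eq_zero.1 (h0 y hy)).resolve_right hyi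
  refine Finset.mem_convexHull'.2 ⟨w, fun y hy => hw y (Finset.mem_filter.1 hy).1, ?_, ?_⟩
  · rw [← hsum, Finset.sum_filter]
    refine Finset.sum_congr rfl fun y hy => ?_
    split_ifs with h
    · rfl
    · exact (key y hy h).symm
  · rw [Finset.sum_filter]
    refine Finset.sum_congr rfl fun y hy => ?_
    split_ifs with h
    · rfl
    · rw [key y hy h, zero_smul]

end Triangulation

/-! ### Cells containing a given ridge -/

namespace Triangulation

variable {n : ℕ} (T : Triangulation n)

/-- Moving slightly from the barycenter of the codimension-one face `σ` of the face `S` in a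
direction `d` that stays in the simplex, one enters a cell `σ ∪ {w}` on the side of `d`. -/
lemma exists_coface {σ : Finset (Fin n → ℝ)} (hσ : σ ∈ T.complex.faces) {S : Finset (Fin n)}
    (hS : ∀ x ∈ σ, x ∈ coordSpan S) (hc : σ.card + 1 = S.card) {d : Fin n → ℝ}
    (hdS : d ∈ coordSpan S) (hd : d ∉ Submodule.span ℝ (σ : Set (Fin n → ℝ)))
    (hin : ∀ i, (∀ x ∈ σ, x i = 0) → 0 ≤ d i) :
    ∃ w, w ∉ σ ∧ insert w σ ∈ T.complex.faces ∧ w ∈ coordSpan S ∧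
      ∃ c : ℝ, 0 < c ∧ d - c • w ∈ Submodule.span ℝ (σ : Set (Fin n → ℝ)) := by
  have hne : σ.Nonempty := T.complex.nonempty_of_mem_faces hσ
  have hcard : (0 : ℝ) < σ.card := by exact_mod_cast hne.card_pos
  set m : ℝ := (σ.card : ℝ)⁻¹ with hm
  have hmpos : 0 < m := inv_pos.2 hcard
  have hmsum : ∑ x ∈ σ, m = 1 := by
    rw [Finset.sum_const, nsmul_eq_mul, hm, mul_inv_cancel₀ hcard.ne']
  set p : Fin n → ℝ := ∑ x ∈ σ, m • x with hp
  have hpi : ∀ i, p i = ∑ x ∈ σ, m * x i := fun i => by simp [hp, Finset.sum_apply]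
  have hpspan : p ∈ Submodule.span ℝ (σ : Set (Fin n → ℝ)) :=
    Submodule.sum_mem _ fun x hx => Submodule.smul_mem _ _ (Submodule.subset_span hx)
  have hpS : p ∈ coordSpan S := (Submodule.span_le.2 hS) hpspan
  have hp0 : ∀ i, 0 ≤ p i := fun i => by
    rw [hpi]
    exact Finset.sum_nonneg fun x hx => mul_nonneg hmpos.le ((T.mem_simplex hσ hx).1 i)
  have hp1 : ∑ i, p i = 1 := by
    simp only [hpi]
    rw [Finset.sum_comm, ← hmsum]
    refine Finset.sum_congr rfl fun x hx => ?_
    rw [← Finset.mul_sum, (T.mem_simplex hσ hx).2, mul_one]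
  set s : ℝ := ∑ i, d i with hs
  let q : ℝ → (Fin n → ℝ) := fun ε => (1 + ε * s)⁻¹ • (p + ε • d)
  have hq0 : q 0 = p := by simp [q]
  have hlin : Filter.Tendsto (fun ε : ℝ => 1 + ε * s) (nhds 0) (nhds 1) := by
    have : Continuous (fun ε : ℝ => 1 + ε * s) := by fun_prop
    simpa using this.tendsto 0
  have hqt : Filter.Tendsto q (nhds 0) (nhds p) := by
    have h2 : Filter.Tendsto (fun ε : ℝ => p + ε • d) (nhds 0) (nhds p) := by
      have : Continuous (fun ε : ℝ => p + ε • d) := by fun_prop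
      simpa using this.tendsto 0
    have h3 := (hlin.inv₀ one_ne_zero).smul h2
    rwa [inv_one, one_smul] at h3
  -- the simplices that miss `p` stay away from `p`
  set bad : Set (Fin n → ℝ) :=
    ⋃ τ ∈ {τ | τ ∈ T.complex.faces ∧ p ∉ convexHull ℝ (τ : Set (Fin n → ℝ))},
      convexHull ℝ (τ : Set (Fin n → ℝ)) with hbad
  have hclosed : IsClosed bad :=
    (T.finite.subset fun τ h => h.1).isClosed_biUnion
      fun τ _ => τ.finite_toSet.isClosed_convexHull ℝ
  have hpbad : p ∉ bad := by
    simp only [hbad, Set.mem_iUnion, not_exists]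
    intro τ hτ
    exact hτ.2
  have e1 : ∀ᶠ ε in nhdsWithin (0 : ℝ) (Set.Ioi 0), 0 < 1 + ε * s :=
    (hlin.mono_left nhdsWithin_le_nhds).eventually (lt_mem_nhds one_pos)
  have e2 : ∀ᶠ ε in nhdsWithin (0 : ℝ) (Set.Ioi 0), q ε ∉ bad :=
    (hqt.mono_left nhdsWithin_le_nhds).eventually (hclosed.isOpen_compl.mem_nhds hpbad)
  have e3 : ∀ᶠ ε in nhdsWithin (0 : ℝ) (Set.Ioi 0), ∀ i, 0 ≤ p i + ε * d i := by
    rw [Filter.eventually_all]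
    intro i
    rcases (hp0 i).eq_or_lt with h | h
    · filter_upwards [self_mem_nhdsWithin] with ε hε
      have hz : ∀ x ∈ σ, x i = 0 := by
        have h' := (hpi i).symm.trans h.symm
        rw [Finset.sum_eq_zero_iff_of_nonneg
          (fun x hx => mul_nonneg hmpos.le ((T.mem_simplex hσ hx).1 i))] at h'
        exact fun x hx => (mul_eq_zero.1 (h' x hx)).resolve_left hmpos.ne'
      rw [← h, zero_add]
      exact mul_nonneg (le_of_lt hε) (hin i hz)
    · have : Filter.Tendsto (fun ε : ℝ => p i + ε * d i) (nhds 0) (nhds (p i)) := by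
        have : Continuous (fun ε : ℝ => p i + ε * d i) := by fun_prop
        simpa using this.tendsto 0
      filter_upwards [(this.mono_left nhdsWithin_le_nhds).eventually (lt_mem_nhds h)] with ε hε
      exact hε.le
  obtain ⟨ε, ⟨h1, h2, h3⟩, hε⟩ := ((e1.and (e2.and e3)).and self_mem_nhdsWithin).exists
  replace hε : 0 < ε := hε
  have hqsimp : q ε ∈ T.complex.space := by
    rw [T.space_eq]
    refine ⟨fun i => ?_, ?_⟩
    · simp only [q, Pi.smul_apply, Pi.add_apply, smul_eq_mul]
      exact mul_nonneg (inv_nonneg.2 h1.le) (h3 i)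
    · simp only [q, Pi.smul_apply, Pi.add_apply, smul_eq_mul]
      rw [← Finset.mul_sum, Finset.sum_add_distrib, ← Finset.mul_sum, hp1, ← hs,
        inv_mul_cancel₀ h1.ne']
  obtain ⟨τ, hτ, hqτ⟩ := T.complex.mem_space_iff.1 hqsimp
  have hpτ : p ∈ convexHull ℝ (τ : Set (Fin n → ℝ)) := by
    by_contra hcon
    exact h2 (Set.mem_biUnion (x := τ) ⟨hτ, hcon⟩ hqτ)
  have hστ : σ ⊆ τ := T.subset_of_pos hσ hτ (w := fun _ => m) (fun _ _ => hmpos) hmsum hpτ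
  have hqS : q ε ∈ coordSpan S :=
    Submodule.smul_mem _ _ (Submodule.add_mem _ hpS (Submodule.smul_mem _ _ hdS))
  have hqτ' := T.mem_convexHull_filter hτ hqτ hqS
  set τ' := τ.filter (fun y => y ∈ coordSpan S) with hτ'
  have hστ' : σ ⊆ τ' := fun x hx => Finset.mem_filter.2 ⟨hστ hx, hS x hx⟩
  have hτ'f : τ' ∈ T.complex.faces :=
    T.complex.down_closed hτ (Finset.filter_subset _ _) (hne.mono hστ')
  have hdq : d = ε⁻¹ • ((1 + ε * s) • q ε - p) := by
    simp only [q]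
    rw [smul_inv_smul₀ h1.ne', add_sub_cancel_left, inv_smul_smul₀ hε.ne']
  have hqspan : q ε ∉ Submodule.span ℝ (σ : Set (Fin n → ℝ)) := by
    intro hcon
    apply hd
    rw [hdq]
    exact Submodule.smul_mem _ _ (Submodule.sub_mem _ (Submodule.smul_mem _ _ hcon) hpspan)
  obtain ⟨w, hw, hwσ⟩ : ∃ w ∈ τ', w ∉ σ := by
    by_contra! hcon
    have : τ' = σ := Finset.Subset.antisymm hcon hστ'
    rw [this] at hqτ'
    exact hqspan (convexHull_min Submodule.subset_span (Submodule.convex _) hqτ')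
  have hins : insert w σ = τ' := by
    refine Finset.eq_of_subset_of_card_le (Finset.insert_subset hw hστ') ?_
    rw [Finset.card_insert_of_notMem hwσ, hc]
    exact T.card_le hτ'f fun x hx => (Finset.mem_filter.1 hx).2
  refine ⟨w, hwσ, hins ▸ hτ'f, (Finset.mem_filter.1 hw).2, ?_⟩
  rw [← hins] at hqτ'
  obtain ⟨l, hl, -, hlq⟩ := Finset.mem_convexHull'.1 hqτ'
  rw [Finset.sum_insert hwσ] at hlq
  have hrest : ∑ x ∈ σ, l x • x ∈ Submodule.span ℝ (σ : Set (Fin n → ℝ)) :=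
    Submodule.sum_mem _ fun x hx => Submodule.smul_mem _ _ (Submodule.subset_span hx)
  have hlw : 0 < l w := by
    refine lt_of_le_of_ne (hl w (Finset.mem_insert_self _ _)) fun h0 => hqspan ?_
    rw [← hlq, ← h0, zero_smul, zero_add]
    exact hrest
  refine ⟨ε⁻¹ * ((1 + ε * s) * l w), by positivity, ?_⟩
  have : d - (ε⁻¹ * ((1 + ε * s) * l w)) • w
      = ε⁻¹ • ((1 + ε * s) • (∑ x ∈ σ, l x • x) - p) := by
    conv_lhs => rw [hdq, ← hlq]
    module
  rw [this]
  exact Submodule.smul_mem _ _ (Submodule.sub_mem _ (Submodule.smul_mem _ _ hrest) hpspan)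

/-- On each side of `σ` there is at most one cell `σ ∪ {w}`. -/
lemma coface_unique {σ : Finset (Fin n → ℝ)} (hσ : σ ∈ T.complex.faces) {w w' : Fin n → ℝ}
    (hw : w ∉ σ) (hw' : w' ∉ σ) (hf : insert w σ ∈ T.complex.faces)
    (hf' : insert w' σ ∈ T.complex.faces) {c : ℝ} (hc : 0 < c)
    (h : w' - c • w ∈ Submodule.span ℝ (σ : Set (Fin n → ℝ))) : w = w' := by
  have hne : σ.Nonempty := T.complex.nonempty_of_mem_faces hσ
  have hcard : (0 : ℝ) < σ.card := by exact_mod_cast hne.card_pos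
  set m : ℝ := (σ.card : ℝ)⁻¹ with hm
  have hmpos : 0 < m := inv_pos.2 hcard
  have hmsum : ∑ x ∈ σ, m = 1 := by
    rw [Finset.sum_const, nsmul_eq_mul, hm, mul_inv_cancel₀ hcard.ne']
  obtain ⟨g, -, hg⟩ := Submodule.mem_span_finset.1 h
  have hgs : ∑ x ∈ σ, g x = 1 - c := by
    have := congrArg (fun v : Fin n → ℝ => ∑ i, v i) hg
    simp only [Finset.sum_apply, Pi.smul_apply, smul_eq_mul, Pi.sub_apply,
      Finset.sum_sub_distrib] at this
    rw [Finset.sum_comm, ← Finset.mul_sum,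
      (T.mem_simplex hf' (Finset.mem_insert_self _ _)).2,
      (T.mem_simplex hf (Finset.mem_insert_self _ _)).2, mul_one] at this
    rw [← this]
    refine Finset.sum_congr rfl fun y hy => ?_
    rw [← Finset.mul_sum, (T.mem_simplex hσ hy).2, mul_one]
  have e1 : ∀ᶠ ε in nhdsWithin (0 : ℝ) (Set.Ioi 0), ∀ x ∈ σ, 0 < (1 - ε) * m + ε * g x := by
    rw [Filter.eventually_all_finset]
    intro x _
    have : Filter.Tendsto (fun ε : ℝ => (1 - ε) * m + ε * g x) (nhds 0) (nhds m) := by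
      have : Continuous (fun ε : ℝ => (1 - ε) * m + ε * g x) := by fun_prop
      simpa using this.tendsto 0
    exact (this.mono_left nhdsWithin_le_nhds).eventually (lt_mem_nhds hmpos)
  have e2 : ∀ᶠ ε in nhdsWithin (0 : ℝ) (Set.Ioi 0), ε < 1 :=
    nhdsWithin_le_nhds (gt_mem_nhds one_pos)
  obtain ⟨ε, ⟨h1, h2⟩, hε⟩ := ((e1.and e2).and self_mem_nhdsWithin).exists
  replace hε : 0 < ε := hε
  let W : (Fin n → ℝ) → ℝ := fun x => if x = w then ε * c else (1 - ε) * m + ε * g x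
  have hWσ : ∀ x ∈ σ, W x = (1 - ε) * m + ε * g x := fun x hx => by
    have : x ≠ w := fun h => hw (h ▸ hx)
    simp [W, this]
  have hWw : W w = ε * c := by simp [W]
  have hsub : insert w σ ⊆ insert w' σ := by
    refine T.subset_of_pos hf hf' (w := W) ?_ ?_ ?_
    · intro x hx
      rcases Finset.mem_insert.1 hx with rfl | hx
      · rw [hWw]; positivity
      · rw [hWσ x hx]; exact h1 x hx
    · rw [Finset.sum_insert hw, hWw, Finset.sum_congr rfl hWσ, Finset.sum_add_distrib,
        ← Finset.mul_sum, ← Finset.mul_sum, hmsum, hgs]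
      ring
    · let U : (Fin n → ℝ) → ℝ := fun x => if x = w' then ε else (1 - ε) * m
      have hUσ : ∀ x ∈ σ, U x = (1 - ε) * m := fun x hx => by
        have : x ≠ w' := fun h => hw' (h ▸ hx)
        simp [U, this]
      have hUw : U w' = ε := by simp [U]
      refine Finset.mem_convexHull'.2 ⟨U, ?_, ?_, ?_⟩
      · intro x hx
        have : 0 < 1 - ε := by linarith
        rcases Finset.mem_insert.1 hx with rfl | hx
        · rw [hUw]; positivity
        · rw [hUσ x hx]; positivity
      · rw [Finset.sum_insert hw', hUw, Finset.sum_congr rfl hUσ, ← Finset.mul_sum, hmsum]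
        ring
      · have hA : ∑ x ∈ σ, W x • x = ∑ x ∈ σ, U x • x + ε • ∑ x ∈ σ, g x • x := by
          rw [Finset.smul_sum, ← Finset.sum_add_distrib]
          refine Finset.sum_congr rfl fun x hx => ?_
          rw [hWσ x hx, hUσ x hx]
          module
        rw [Finset.sum_insert hw', Finset.sum_insert hw, hUw, hWw, hA, hg]
        module
  have := hsub (Finset.mem_insert_self w σ)
  exact (Finset.mem_insert.1 this).resolve_right hw

end Triangulation

/-! ### Stokes' theorem modulo 2 -/

namespace Triangulation

variable {n : ℕ} (T : Triangulation n)

/-- The vertices `w` that complete the ridge `σ` to a cell `σ ∪ {w}` of the face of `Δ`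
spanned by `S`. -/
def apices (S : Finset (Fin n)) (σ : Finset (Fin n → ℝ)) : Finset (Fin n → ℝ) :=
  (T.finite.toFinset.biUnion id).filter
    (fun w => w ∉ σ ∧ insert w σ ∈ T.complex.faces ∧ w ∈ coordSpan S)

lemma mem_apices {S : Finset (Fin n)} {σ : Finset (Fin n → ℝ)} {w : Fin n → ℝ} :
    w ∈ T.apices S σ ↔ w ∉ σ ∧ insert w σ ∈ T.complex.faces ∧ w ∈ coordSpan S := by
  simp only [apices, Finset.mem_filter, Finset.mem_biUnion, id, Set.Finite.mem_toFinset,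
    and_iff_right_iff_imp]
  exact fun h => ⟨_, h.2.1, Finset.mem_insert_self _ _⟩

lemma apex_unique {σ : Finset (Fin n → ℝ)} (hσ : σ ∈ T.complex.faces) {S : Finset (Fin n)}
    {w w' d : Fin n → ℝ} (hw : w ∈ T.apices S σ) (hw' : w' ∈ T.apices S σ) {c c' : ℝ}
    (hc : 0 < c) (hc' : 0 < c') (h : d - c • w ∈ Submodule.span ℝ (σ : Set (Fin n → ℝ)))
    (h' : d - c' • w' ∈ Submodule.span ℝ (σ : Set (Fin n → ℝ))) : w = w' := by
  rw [mem_apices] at hw hw'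
  refine T.coface_unique hσ hw.1 hw'.1 hw.2.1 hw'.2.1 (c := c'⁻¹ * c) (by positivity) ?_
  have : w' - (c'⁻¹ * c) • w = c'⁻¹ • ((d - c • w) - (d - c' • w')) := by
    rw [sub_sub_sub_cancel_left, smul_sub, smul_smul, smul_smul, inv_mul_cancel₀ hc'.ne',
      one_smul]
  rw [this]
  exact Submodule.smul_mem _ _ (Submodule.sub_mem _ h h')

/-- A ridge on the boundary of the face `S` lies in exactly one cell of `S`. -/
lemma card_apices_boundary {σ : Finset (Fin n → ℝ)} (hσ : σ ∈ T.complex.faces)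
    {S : Finset (Fin n)} (hc : σ.card + 1 = S.card) {i : Fin n} (hi : i ∈ S)
    (hS : ∀ x ∈ σ, x ∈ coordSpan (S.erase i)) : (T.apices S σ).card = 1 := by
  have hspan : Submodule.span ℝ (σ : Set (Fin n → ℝ)) = coordSpan (S.erase i) :=
    T.span_eq hσ hS (by rw [Finset.card_erase_of_mem hi]; omega)
  have hmem : ∀ x ∈ coordSpan S, x i = 0 → x ∈ coordSpan (S.erase i) := by
    intro x hx hxi
    rw [mem_coordSpan] at hx ⊢
    intro j hj
    by_cases hji : j = i
    · rw [hji, hxi]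
    · exact hx j fun h => hj (Finset.mem_erase.2 ⟨hji, h⟩)
  have hpos : ∀ w ∈ T.apices S σ, 0 < w i := by
    intro w hw
    rw [mem_apices] at hw
    refine lt_of_le_of_ne ((T.mem_simplex hw.2.1 (Finset.mem_insert_self _ _)).1 i) fun h => ?_
    exact T.notMem_span hw.1 hw.2.1 (hspan ▸ hmem w hw.2.2 h.symm)
  have hd : (Pi.single i 1 : Fin n → ℝ) ∈ coordSpan S := by
    rw [mem_coordSpan]
    intro j hj
    have : j ≠ i := by rintro rfl; exact hj hi
    simp [this]
  obtain ⟨w, h1, h2, h3, -⟩ := T.exists_coface hσ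
    (fun x hx => coordSpan_mono (Finset.erase_subset i S) (hS x hx)) hc hd
    (by
      rw [hspan, mem_coordSpan]
      intro h
      simpa using h i (by simp))
    (fun j _ => by
      by_cases h : j = i
      · subst h; simp
      · simp [h])
  have hw : w ∈ T.apices S σ := T.mem_apices.2 ⟨h1, h2, h3⟩
  rw [Finset.card_eq_one]
  refine ⟨w, Finset.eq_singleton_iff_unique_mem.2 ⟨hw, fun w' hw' => ?_⟩⟩
  have key : ∀ v ∈ T.apices S σ, (Pi.single i 1 : Fin n → ℝ) - (v i)⁻¹ • v ∈
      Submodule.span ℝ (σ : Set (Fin n → ℝ)) := by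
    intro v hv
    rw [hspan]
    refine hmem _ (Submodule.sub_mem _ hd (Submodule.smul_mem _ _ (T.mem_apices.1 hv).2.2)) ?_
    simp [(hpos v hv).ne']
  exact T.apex_unique hσ hw' hw (inv_pos.2 (hpos w' hw')) (inv_pos.2 (hpos w hw))
    (key w' hw') (key w hw)

/-- A ridge interior to the face `S` lies in exactly two cells of `S`. -/
lemma card_apices_interior {σ : Finset (Fin n → ℝ)} (hσ : σ ∈ T.complex.faces)
    {S : Finset (Fin n)} (hc : σ.card + 1 = S.card) (hS : ∀ x ∈ σ, x ∈ coordSpan S)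
    (hint : ∀ i ∈ S, ∃ x ∈ σ, x i ≠ 0) : (T.apices S σ).card = 2 := by
  obtain ⟨d, hdS, hd⟩ : ∃ d ∈ coordSpan S, d ∉ Submodule.span ℝ (σ : Set (Fin n → ℝ)) := by
    by_contra! hcon
    have := Submodule.finrank_mono (show coordSpan S ≤ _ from hcon)
    rw [finrank_coordSpan, T.finrank_span hσ] at this
    omega
  have hin : ∀ d ∈ coordSpan S, ∀ i, (∀ x ∈ σ, x i = 0) → 0 ≤ d i := by
    intro d hd i hi
    by_cases h : i ∈ S
    · obtain ⟨x, hx, hxi⟩ := hint i h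
      exact absurd (hi x hx) hxi
    · rw [mem_coordSpan.1 hd i h]
  obtain ⟨w, a1, a2, a3, c, hcpos, hcw⟩ := T.exists_coface hσ hS hc hdS hd (hin d hdS)
  obtain ⟨w', b1, b2, b3, c', hcpos', hcw'⟩ := T.exists_coface hσ hS hc
    (Submodule.neg_mem _ hdS) (fun h => hd (by simpa using Submodule.neg_mem _ h))
    (hin (-d) (Submodule.neg_mem _ hdS))
  have hw : w ∈ T.apices S σ := T.mem_apices.2 ⟨a1, a2, a3⟩
  have hw' : w' ∈ T.apices S σ := T.mem_apices.2 ⟨b1, b2, b3⟩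
  rw [Finset.card_eq_two]
  refine ⟨w, w', ?_, ?_⟩
  · rintro rfl
    apply T.notMem_span a1 a2
    have h := Submodule.smul_mem _ (-(c + c')⁻¹) (Submodule.add_mem _ hcw hcw')
    have e : (-(c + c')⁻¹) • (d - c • w + (-d - c' • w)) = w := by
      have : d - c • w + (-d - c' • w) = (-(c + c')) • w := by module
      rw [this, smul_smul, neg_mul_neg, inv_mul_cancel₀ (by positivity), one_smul]
    rwa [e] at h
  · ext v
    rw [Finset.mem_insert, Finset.mem_singleton]
    refine ⟨fun hv => ?_, by rintro (rfl | rfl) <;> assumption⟩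
    have hv' := T.mem_apices.1 hv
    have hspan := T.span_eq hv'.2.1 (S := S)
      (fun x hx => by
        rcases Finset.mem_insert.1 hx with rfl | hx
        · exact hv'.2.2
        · exact hS x hx)
      (by rw [Finset.card_insert_of_notMem hv'.1, hc])
    rw [← hspan, Finset.coe_insert, Submodule.mem_span_insert] at hdS
    obtain ⟨a, z, hz, hdz⟩ := hdS
    rcases lt_trichotomy a 0 with ha | ha | ha
    · right
      refine T.apex_unique hσ hv hw' (neg_pos.2 ha) hcpos' (d := -d) ?_ hcw'
      have : -d - (-a) • v = -z := by rw [hdz]; module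
      rw [this]
      exact Submodule.neg_mem _ hz
    · refine absurd ?_ hd
      rw [hdz, ha, zero_smul, zero_add]
      exact hz
    · left
      refine T.apex_unique hσ hv hw ha hcpos (d := d) ?_ hcw
      have : d - a • v = z := by rw [hdz]; module
      rw [this]
      exact hz

/-- The full-dimensional cells of the triangulation induced on the face of `Δ` spanned by `S`. -/
def cells (S : Finset (Fin n)) : Finset (Finset (Fin n → ℝ)) :=
  T.finite.toFinset.filter (fun σ => σ.card = S.card ∧ ∀ x ∈ σ, x ∈ coordSpan S)

lemma mem_cells {S : Finset (Fin n)} {σ : Finset (Fin n → ℝ)} :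
    σ ∈ T.cells S ↔ σ ∈ T.complex.faces ∧ σ.card = S.card ∧ ∀ x ∈ σ, x ∈ coordSpan S := by
  simp [cells]

/-- Stokes' theorem modulo 2 on the face of `Δ` spanned by `S`: summing a coboundary over the
cells of the face leaves the contributions of the cells of its facets. -/
theorem sum_coboundary {S : Finset (Fin n)} (hS : 2 ≤ S.card)
    (g : Finset (Fin n → ℝ) → ZMod 2) :
    ∑ τ ∈ T.cells S, ∑ u ∈ τ, g (τ.erase u) = ∑ i ∈ S, ∑ σ ∈ T.cells (S.erase i), g σ := by
  set R : Finset (Finset (Fin n → ℝ)) :=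
    T.finite.toFinset.filter (fun σ => σ.card + 1 = S.card ∧ ∀ x ∈ σ, x ∈ coordSpan S) with hR
  have memR : ∀ σ, σ ∈ R ↔ σ ∈ T.complex.faces ∧ σ.card + 1 = S.card ∧
      ∀ x ∈ σ, x ∈ coordSpan S := by simp [hR]
  have h1 : ∑ τ ∈ T.cells S, ∑ u ∈ τ, g (τ.erase u) = ∑ σ ∈ R, ∑ _w ∈ T.apices S σ, g σ := by
    rw [Finset.sum_sigma', Finset.sum_sigma']
    refine Finset.sum_bij' (fun x _ => ⟨x.1.erase x.2, x.2⟩) (fun x _ => ⟨insert x.2 x.1, x.2⟩)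
      ?_ ?_ ?_ ?_ ?_
    · rintro ⟨τ, u⟩ h
      simp only [Finset.mem_sigma, mem_cells, memR, mem_apices] at h ⊢
      obtain ⟨⟨hτ, hcard, hτS⟩, hu⟩ := h
      have hce : (τ.erase u).card + 1 = τ.card := Finset.card_erase_add_one hu
      refine ⟨⟨T.complex.down_closed hτ (Finset.erase_subset _ _)
        (Finset.card_pos.1 (by omega)), by omega,
        fun x hx => hτS x (Finset.mem_of_mem_erase hx)⟩, Finset.notMem_erase _ _, ?_, hτS u hu⟩
      rwa [Finset.insert_erase hu]
    · rintro ⟨σ, w⟩ h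
      simp only [Finset.mem_sigma, mem_cells, memR, mem_apices] at h ⊢
      obtain ⟨⟨hσ, hcard, hσS⟩, hw, hf, hwS⟩ := h
      refine ⟨⟨hf, by rw [Finset.card_insert_of_notMem hw, hcard], fun x hx => ?_⟩,
        Finset.mem_insert_self _ _⟩
      rcases Finset.mem_insert.1 hx with rfl | hx
      · exact hwS
      · exact hσS x hx
    · rintro ⟨τ, u⟩ h
      simp only [Finset.mem_sigma] at h
      simp [Finset.insert_erase h.2]
    · rintro ⟨σ, w⟩ h
      simp only [Finset.mem_sigma, mem_apices] at h
      simp [Finset.erase_insert h.2.1]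
    · rintro ⟨τ, u⟩ h
      rfl
  have h2 : ∑ i ∈ S, ∑ σ ∈ T.cells (S.erase i), g σ
      = ∑ σ ∈ R, ∑ _i ∈ S.filter (fun i => ∀ x ∈ σ, x ∈ coordSpan (S.erase i)), g σ := by
    rw [Finset.sum_sigma', Finset.sum_sigma']
    refine Finset.sum_bij' (fun x _ => ⟨x.2, x.1⟩) (fun x _ => ⟨x.2, x.1⟩)
      ?_ ?_ (fun _ _ => rfl) (fun _ _ => rfl) (fun _ _ => rfl)
    · rintro ⟨i, σ⟩ h
      simp only [Finset.mem_sigma, mem_cells, memR, Finset.mem_filter] at h ⊢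
      obtain ⟨hi, hσ, hcard, hσS⟩ := h
      rw [Finset.card_erase_of_mem hi] at hcard
      exact ⟨⟨hσ, by omega, fun x hx => coordSpan_mono (Finset.erase_subset i S) (hσS x hx)⟩,
        hi, hσS⟩
    · rintro ⟨σ, i⟩ h
      simp only [Finset.mem_sigma, mem_cells, memR, Finset.mem_filter] at h ⊢
      obtain ⟨⟨hσ, hcard, -⟩, hi, hσS⟩ := h
      refine ⟨hi, hσ, ?_, hσS⟩
      rw [Finset.card_erase_of_mem hi]
      omega
  rw [h1, h2]
  refine Finset.sum_congr rfl fun σ hσR => ?_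
  obtain ⟨hσ, hcard, hσS⟩ := (memR σ).1 hσR
  rw [Finset.sum_const, Finset.sum_const]
  by_cases hb : ∃ i ∈ S, ∀ x ∈ σ, x ∈ coordSpan (S.erase i)
  · obtain ⟨i, hi, hσi⟩ := hb
    have : S.filter (fun i => ∀ x ∈ σ, x ∈ coordSpan (S.erase i)) = {i} := by
      refine Finset.eq_singleton_iff_unique_mem.2 ⟨Finset.mem_filter.2 ⟨hi, hσi⟩, fun j hj => ?_⟩
      obtain ⟨hj, hσj⟩ := Finset.mem_filter.1 hj
      -- a ridge cannot lie in two facets of `S`: the dimension would be too small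
      by_contra hne
      have hle := T.card_le hσ (S := (S.erase i).erase j) fun x hx => by
        rw [mem_coordSpan]
        intro k hk
        by_cases hkj : k = j
        · exact mem_coordSpan.1 (hσj x hx) k (by simp [hkj])
        · exact mem_coordSpan.1 (hσi x hx) k fun h => hk (Finset.mem_erase.2 ⟨hkj, h⟩)
      rw [Finset.card_erase_of_mem (Finset.mem_erase.2 ⟨hne, hj⟩),
        Finset.card_erase_of_mem hi] at hle
      omega
    rw [this, T.card_apices_boundary hσ hcard hi hσi, Finset.card_singleton]
  · have : S.filter (fun i => ∀ x ∈ σ, x ∈ coordSpan (S.erase i)) = ∅ :=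
      Finset.filter_eq_empty_iff.2 fun i hi h => hb ⟨i, hi, h⟩
    rw [this, T.card_apices_interior hσ hcard hσS, Finset.card_empty, zero_smul, two_nsmul,
      CharTwo.add_self_eq_zero]
    intro i hi
    by_contra! hcon
    refine hb ⟨i, hi, fun x hx => ?_⟩
    rw [mem_coordSpan]
    intro j hj
    by_cases hji : j = i
    · rw [hji, hcon x hx]
    · exact mem_coordSpan.1 (hσS x hx) j fun h => hj (Finset.mem_erase.2 ⟨hji, h⟩)

/-- The only cell of a vertex `e_i` of `Δ` is `{e_i}`. -/
lemma cells_singleton (i : Fin n) : T.cells {i} = {{Pi.single i 1}} := by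
  have hx : ∀ x ∈ stdSimplex ℝ (Fin n), x ∈ coordSpan {i} → x = Pi.single i 1 := by
    intro x hx hxi
    rw [mem_coordSpan] at hxi
    have h0 : ∀ j, j ≠ i → x j = 0 := fun j hj => hxi j (by simpa using hj)
    have h1 : x i = 1 := by
      rw [← hx.2, Finset.sum_eq_single i (fun j _ hj => h0 j hj) (by simp)]
    ext j
    by_cases hj : j = i
    · subst hj; simp [h1]
    · simp [hj, h0 j hj]
  have hspace : (Pi.single i 1 : Fin n → ℝ) ∈ T.complex.space := by
    rw [T.space_eq]
    exact single_mem_stdSimplex ℝ i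
  have hspan : (Pi.single i 1 : Fin n → ℝ) ∈ coordSpan {i} := by
    rw [mem_coordSpan]
    intro j hj
    simp only [Finset.mem_singleton] at hj
    simp [hj]
  obtain ⟨τ, hτ, hiτ⟩ := T.complex.mem_space_iff.1 hspace
  have h := T.mem_convexHull_filter hτ hiτ hspan
  obtain ⟨y, hy⟩ : (τ.filter (fun y => y ∈ coordSpan {i})).Nonempty := by
    rw [← Finset.coe_nonempty, ← convexHull_nonempty_iff (𝕜 := ℝ)]
    exact ⟨_, h⟩
  obtain ⟨hyτ, hyi⟩ := Finset.mem_filter.1 hy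
  have hyeq := hx y (T.mem_simplex hτ hyτ) hyi
  refine Finset.eq_singleton_iff_unique_mem.2 ⟨?_, fun σ hσ => ?_⟩
  · refine T.mem_cells.2 ⟨?_, by simp, by simpa using hspan⟩
    rw [← hyeq]
    exact T.complex.down_closed hτ (by simpa using hyτ) (Finset.singleton_nonempty _)
  · obtain ⟨hσ, hcard, hσi⟩ := T.mem_cells.1 hσ
    rw [Finset.card_singleton, Finset.card_eq_one] at hcard
    obtain ⟨z, rfl⟩ := hcard
    rw [hx z (T.mem_simplex hσ (by simp)) (hσi z (by simp))]

end Triangulation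

/-! ### The symmetries `r^j` -/

section Symmetry

variable {n : ℕ}

lemma rmap_rho (j : Fin n) (x : Fin n → ℝ) (i : Fin n) : rmap j x (rho j i) = x i := by
  simp [rmap]

lemma rmap_injective (j : Fin n) : Function.Injective (rmap j) := by
  intro x y h
  ext i
  rw [← rmap_rho j x, h, rmap_rho]

lemma rmap_mem_coordSpan (j : Fin n) (x : Fin n → ℝ) (S : Finset (Fin n)) :
    rmap j x ∈ coordSpan (S.image (rho j)) ↔ x ∈ coordSpan S := by
  rw [mem_coordSpan, mem_coordSpan]
  constructor
  · intro h i hi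
    rw [← rmap_rho j x]
    exact h _ (by simpa using hi)
  · intro h i hi
    obtain ⟨k, rfl⟩ := (rho j).surjective i
    rw [rmap_rho]
    exact h k fun hk => hi (Finset.mem_image_of_mem _ hk)

/-- `r^j` as a linear map. -/
def rlin (j : Fin n) : (Fin n → ℝ) →ₗ[ℝ] (Fin n → ℝ) := LinearMap.funLeft ℝ ℝ (rho j).symm

lemma rlin_apply (j : Fin n) (x : Fin n → ℝ) : rlin j x = rmap j x := rfl

variable [NeZero n] (T : Triangulation n)

lemma rho_zero_eq (j : Fin n) : rho j 0 = j := by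
  rw [rho, Equiv.Perm.inv_eq_iff_eq, Fin.cycleRange_self]

/-- Although niceness only asks that `r^j` maps faces in the `0`-facet to faces, every face in
the `j`-facet arises in this way: the images already cover the `j`-facet. -/
lemma Triangulation.IsNice.exists_preimage {T : Triangulation n} (hT : T.IsNice) (j : Fin n)
    {σ : Finset (Fin n → ℝ)} (hσ : σ ∈ T.complex.faces) (hj : ∀ x ∈ σ, x j = 0) :
    ∃ σ' ∈ T.complex.faces, (∀ x ∈ σ', x 0 = 0) ∧ σ'.image (rmap j) = σ := by
  have hne : σ.Nonempty := T.complex.nonempty_of_mem_faces hσ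
  have hcard : (0 : ℝ) < σ.card := by exact_mod_cast hne.card_pos
  set m : ℝ := (σ.card : ℝ)⁻¹ with hm
  have hmpos : 0 < m := inv_pos.2 hcard
  have hmsum : ∑ x ∈ σ, m = 1 := by
    rw [Finset.sum_const, nsmul_eq_mul, hm, mul_inv_cancel₀ hcard.ne']
  set p : Fin n → ℝ := ∑ x ∈ σ, m • x with hp
  have hpσ : p ∈ convexHull ℝ (σ : Set (Fin n → ℝ)) :=
    Finset.mem_convexHull'.2 ⟨fun _ => m, fun _ _ => hmpos.le, hmsum, rfl⟩
  have hps : p ∈ stdSimplex ℝ (Fin n) := by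
    rw [← T.space_eq]
    exact T.complex.convexHull_subset_space hσ hpσ
  let p' : Fin n → ℝ := fun i => p (rho j i)
  have hpp' : rmap j p' = p := by ext i; simp [rmap, p']
  have hps' : p' ∈ T.complex.space := by
    rw [T.space_eq]
    exact ⟨fun i => hps.1 _, by rw [← hps.2]; exact Equiv.sum_comp (rho j) p⟩
  have memc : ∀ x : Fin n → ℝ, x ∈ coordSpan (Finset.univ.erase (0 : Fin n)) ↔ x 0 = 0 := by
    intro x
    rw [mem_coordSpan]
    exact ⟨fun h => h 0 (by simp), fun h i hi => by simp at hi; rw [hi, h]⟩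
  have hp0 : p' ∈ coordSpan (Finset.univ.erase (0 : Fin n)) := by
    rw [memc]
    simp only [p', rho_zero_eq, hp, Finset.sum_apply, Pi.smul_apply, smul_eq_mul]
    exact Finset.sum_eq_zero fun x hx => by rw [hj x hx, mul_zero]
  obtain ⟨τ, hτ, hpτ⟩ := T.complex.mem_space_iff.1 hps'
  have hpτ' := T.mem_convexHull_filter hτ hpτ hp0
  set τ' := τ.filter (fun y => y ∈ coordSpan (Finset.univ.erase (0 : Fin n))) with hτ'
  have hτ'0 : ∀ x ∈ τ', x 0 = 0 := fun x hx => (memc x).1 (Finset.mem_filter.1 hx).2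
  have hτ'f : τ' ∈ T.complex.faces := by
    refine T.complex.down_closed hτ (Finset.filter_subset _ _) ?_
    rw [← Finset.coe_nonempty, ← convexHull_nonempty_iff (𝕜 := ℝ)]
    exact ⟨_, hpτ'⟩
  have hsub : σ ⊆ τ'.image (rmap j) := by
    refine T.subset_of_pos hσ (hT j τ' hτ'f hτ'0) (w := fun _ => m) (fun _ _ => hmpos) hmsum ?_
    have him := Set.mem_image_of_mem (rlin j) hpτ'
    rw [LinearMap.image_convexHull, rlin_apply, hpp'] at him
    rw [Finset.coe_image]
    exact him
  refine ⟨τ'.filter (fun y => rmap j y ∈ σ), ?_, fun x hx => hτ'0 x (Finset.mem_filter.1 hx).1, ?_⟩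
  · refine T.complex.down_closed hτ'f (Finset.filter_subset _ _) ?_
    obtain ⟨x, hx⟩ := hne
    obtain ⟨y, hy, rfl⟩ := Finset.mem_image.1 (hsub hx)
    exact ⟨y, Finset.mem_filter.2 ⟨hy, hx⟩⟩
  · ext x
    simp only [Finset.mem_image, Finset.mem_filter]
    constructor
    · rintro ⟨y, ⟨-, hy⟩, rfl⟩
      exact hy
    · intro hx
      obtain ⟨y, hy, rfl⟩ := Finset.mem_image.1 (hsub hx)
      exact ⟨y, ⟨hy, hx⟩, rfl⟩

/-- `r^j` is a bijection from the cells of a face `S` of the `0`-facet onto the cells of its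
image. -/
lemma Triangulation.IsNice.sum_cells_image {T : Triangulation n} (hT : T.IsNice) (j : Fin n)
    {S S' : Finset (Fin n)} (h0 : (0 : Fin n) ∉ S) (hS' : S.image (rho j) = S')
    {M : Type*} [AddCommMonoid M] (g : Finset (Fin n → ℝ) → M) :
    ∑ σ ∈ T.cells S', g σ = ∑ σ ∈ T.cells S, g (σ.image (rmap j)) := by
  subst hS'
  symm
  refine Finset.sum_bij (fun σ _ => σ.image (rmap j)) ?_ ?_ ?_ (fun _ _ => rfl)
  · intro σ hσ
    obtain ⟨hσ, hcard, hσS⟩ := T.mem_cells.1 hσ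
    refine T.mem_cells.2 ⟨hT j σ hσ fun x hx => mem_coordSpan.1 (hσS x hx) 0 h0, ?_, ?_⟩
    · have h1 : (σ.image (rmap j)).card = σ.card :=
        Finset.card_image_of_injective _ (rmap_injective j)
      have h2 : (S.image (rho j)).card = S.card :=
        Finset.card_image_of_injective _ (rho j).injective
      rw [h1, hcard, h2]
    · intro x hx
      obtain ⟨y, hy, rfl⟩ := Finset.mem_image.1 hx
      exact (rmap_mem_coordSpan j y S).2 (hσS y hy)
  · intro σ _ τ _ h
    exact Finset.image_injective (rmap_injective j) h
  · intro σ hσ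
    obtain ⟨hσ, hcard, hσS⟩ := T.mem_cells.1 hσ
    have hjS : j ∉ S.image (rho j) := by
      intro h
      obtain ⟨k, hk, hkj⟩ := Finset.mem_image.1 h
      have hk0 : k = 0 := (rho j).injective (hkj.trans (rho_zero_eq j).symm)
      exact h0 (hk0 ▸ hk)
    obtain ⟨σ', hσ', -, rfl⟩ := hT.exists_preimage j hσ fun x hx =>
      mem_coordSpan.1 (hσS x hx) j hjS
    refine ⟨σ', T.mem_cells.2 ⟨hσ', ?_, fun x hx => ?_⟩, rfl⟩
    · have h1 : (σ'.image (rmap j)).card = σ'.card :=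
        Finset.card_image_of_injective _ (rmap_injective j)
      have h2 : (S.image (rho j)).card = S.card :=
        Finset.card_image_of_injective _ (rho j).injective
      rw [← h1, hcard, h2]
    · exact (rmap_mem_coordSpan j x S).1 (hσS _ (Finset.mem_image_of_mem _ hx))

end Symmetry

/-! ### Weights of labels -/

/-- The elements of a label that carry weight. A label with two elements is replaced by one of its
elements, so that the total weight of a label with at most three elements is odd. The choice
is asymmetric: `{0, 3}` is the only two-element label whose larger element is chosen. -/
def core (L : Finset (Fin 4)) : Finset (Fin 4) :=
  if L = {0, 1} ∨ L = {0, 2} then {0}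
  else if L = {1, 2} ∨ L = {1, 3} then {1}
  else if L = {2, 3} then {2}
  else if L = {0, 3} then {3}
  else L

/-- The indicator modulo 2 of the core of a label. -/
def wt (L : Finset (Fin 4)) (i : Fin 4) : ZMod 2 := if i ∈ core L then 1 else 0

/-- The determinant (equivalently permanent) modulo 2 of the coordinates `0, 1, 2` of the weights
of three labels. -/
def det3 (K L M : Finset (Fin 4)) : ZMod 2 :=
  wt K 0 * wt L 1 * wt M 2 + wt K 0 * wt M 1 * wt L 2 + wt L 0 * wt K 1 * wt M 2 +
    wt L 0 * wt M 1 * wt K 2 + wt M 0 * wt K 1 * wt L 2 + wt M 0 * wt L 1 * wt K 2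

/-- The weight used on the `0`-facet: it agrees with `wt`, except that `{0, 2}` weighs `e_2`. -/
def wt' (L : Finset (Fin 4)) (i : Fin 4) : ZMod 2 :=
  if L = {0, 2} then (if i = 2 then 1 else 0) else wt L i

/-- The determinant modulo 2 of the coordinates `1, 2` of the facet weights of two labels. -/
def det2 (K L : Finset (Fin 4)) : ZMod 2 := wt' K 1 * wt' L 2 + wt' L 1 * wt' K 2

/-- The indicator modulo 2 of `2 ∈ L`. -/
def det1 (L : Finset (Fin 4)) : ZMod 2 := if 2 ∈ L then 1 else 0

/-- The relation between the labels of two adjacent vertices: either one of them has at most one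
element, or they are comparable. -/
def Compat (K L : Finset (Fin 4)) : Prop := K.card < 2 ∨ L.card < 2 ∨ K ⊆ L ∨ L ⊆ K

/-- The labels that can occur at a vertex all of whose coordinates in `S` vanish. -/
def OnFace (S L : Finset (Fin 4)) : Prop :=
  L.Nonempty ∧ ((S ⊆ L ∧ L ≠ Finset.univ) ∨ (L.card = 1 ∧ Disjoint S L))

instance : DecidableRel Compat := fun K L => by unfold Compat; infer_instance

instance : DecidableRel OnFace := fun K L => by unfold OnFace; infer_instance

/-- Every label that can occur has odd total weight. -/
lemma wt_sum : ∀ L, OnFace ∅ L → wt L 3 = 1 + wt L 0 + wt L 1 + wt L 2 := by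
  decide +kernel

lemma mem_of_wt_ne_zero : ∀ L i, wt L i ≠ 0 → i ∈ L := by
  decide +kernel

/-- The symmetries identify the four facets with the `0`-facet; adding up the four determinants of
a triangle there leaves a coboundary. -/
lemma sum_det3 : ∀ K, OnFace {0} K → ∀ L, OnFace {0} L → Compat K L →
    ∀ M, OnFace {0} M → Compat K M → Compat L M →
    ∑ j, det3 (K.image (rho j)) (L.image (rho j)) (M.image (rho j)) =
      det2 K L + det2 K M + det2 L M := by
  decide +kernel

/-- The symmetries `ρ^2`, `ρ^3` identify the sides of the `0`-facet with the edge from `e_2` to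
`e_3`; adding up the three values on an edge there leaves a coboundary. -/
lemma sum_det2 : ∀ K, OnFace {0, 1} K → ∀ L, OnFace {0, 1} L → Compat K L →
    det2 K L + det2 (K.image (rho 2)) (L.image (rho 2)) +
      det2 (K.image (rho 3)) (L.image (rho 3)) = det1 K + det1 L := by
  decide +kernel

/-- The label of `e_3` and its image under `ρ^3`, which is the label of `e_2`, contain the element
`2` exactly once altogether. -/
lemma sum_det1 : ∀ L, OnFace {0, 1, 2} L → det1 L + det1 (L.image (rho 3)) = 1 := by
  decide +kernel

/-! ### Cochains on the triangulation -/

section Cochains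

variable (Λ : (Fin 4 → ℝ) → Finset (Fin 4))

/-- The sum of `det1` over the vertices of `σ`. -/
def cochain0 (σ : Finset (Fin 4 → ℝ)) : ZMod 2 := ∑ x ∈ σ, det1 (Λ x)

/-- The cochain whose value on an edge is `det2` of the labels of its vertices. -/
def cochain1 (σ : Finset (Fin 4 → ℝ)) : ZMod 2 :=
  ∑ x ∈ σ, ∑ y ∈ σ.erase x, wt' (Λ x) 1 * wt' (Λ y) 2

/-- The cochain whose value on a triangle is `det3` of the labels of its vertices. -/
def cochain2 (σ : Finset (Fin 4 → ℝ)) : ZMod 2 :=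
  ∑ x ∈ σ, ∑ y ∈ σ.erase x, ∑ z ∈ (σ.erase x).erase y, wt (Λ x) 0 * wt (Λ y) 1 * wt (Λ z) 2

variable {Λ}

lemma cochain0_singleton (a : Fin 4 → ℝ) : cochain0 Λ {a} = det1 (Λ a) := by
  simp [cochain0]

lemma cochain1_pair {a b : Fin 4 → ℝ} (hab : a ≠ b) :
    cochain1 Λ {a, b} = det2 (Λ a) (Λ b) := by
  have e1 : ({a, b} : Finset (Fin 4 → ℝ)).erase a = {b} := by ext; simp; grind
  have e2 : ({a, b} : Finset (Fin 4 → ℝ)).erase b = {a} := by ext; simp; grind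
  rw [cochain1, Finset.sum_pair hab, e1, e2, Finset.sum_singleton, Finset.sum_singleton, det2]

lemma cochain2_triple {a b c : Fin 4 → ℝ} (hab : a ≠ b) (hac : a ≠ c) (hbc : b ≠ c) :
    cochain2 Λ {a, b, c} = det3 (Λ a) (Λ b) (Λ c) := by
  have e1 : ({a, b, c} : Finset (Fin 4 → ℝ)).erase a = {b, c} := by ext; simp; grind
  have e2 : ({a, b, c} : Finset (Fin 4 → ℝ)).erase b = {a, c} := by ext; simp; grind
  have e3 : ({a, b, c} : Finset (Fin 4 → ℝ)).erase c = {a, b} := by ext; simp; grind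
  have f (x y : Fin 4 → ℝ) (h : x ≠ y) : ({x, y} : Finset (Fin 4 → ℝ)).erase x = {y} := by
    ext; simp; grind
  have f' (x y : Fin 4 → ℝ) (h : x ≠ y) : ({x, y} : Finset (Fin 4 → ℝ)).erase y = {x} := by
    ext; simp; grind
  rw [cochain2, Finset.sum_insert (by simp [hab, hac]), Finset.sum_pair hbc, e1, e2, e3,
    Finset.sum_pair hbc, Finset.sum_pair hac, Finset.sum_pair hab, f _ _ hbc, f' _ _ hbc,
    f _ _ hac, f' _ _ hac, f _ _ hab, f' _ _ hab]
  simp only [Finset.sum_singleton, det3]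
  ring

lemma sum_erase_pair {a b : Fin 4 → ℝ} (hab : a ≠ b) (g : Finset (Fin 4 → ℝ) → ZMod 2) :
    ∑ u ∈ ({a, b} : Finset (Fin 4 → ℝ)), g (({a, b} : Finset (Fin 4 → ℝ)).erase u)
      = g {b} + g {a} := by
  have e1 : ({a, b} : Finset (Fin 4 → ℝ)).erase a = {b} := by ext; simp; grind
  have e2 : ({a, b} : Finset (Fin 4 → ℝ)).erase b = {a} := by ext; simp; grind
  rw [Finset.sum_pair hab, e1, e2]

lemma sum_erase_triple {a b c : Fin 4 → ℝ} (hab : a ≠ b) (hac : a ≠ c) (hbc : b ≠ c)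
    (g : Finset (Fin 4 → ℝ) → ZMod 2) :
    ∑ u ∈ ({a, b, c} : Finset (Fin 4 → ℝ)), g (({a, b, c} : Finset (Fin 4 → ℝ)).erase u)
      = g {b, c} + g {a, c} + g {a, b} := by
  have e1 : ({a, b, c} : Finset (Fin 4 → ℝ)).erase a = {b, c} := by ext; simp; grind
  have e2 : ({a, b, c} : Finset (Fin 4 → ℝ)).erase b = {a, c} := by ext; simp; grind
  have e3 : ({a, b, c} : Finset (Fin 4 → ℝ)).erase c = {a, b} := by ext; simp; grind
  rw [Finset.sum_insert (by simp [hab, hac]), Finset.sum_pair hbc, e1, e2, e3, add_assoc]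

/-- Laplace expansion modulo 2: the sum of the maximal minors of a matrix with odd row sums is its
determinant. Here the row sums enter through `h3`, and a matrix with a repeated column has
vanishing determinant. -/
lemma sum_cochain2 {τ : Finset (Fin 4 → ℝ)} (hτ : τ.card = 4)
    (h3 : ∀ u ∈ τ, wt (Λ u) 3 = 1 + wt (Λ u) 0 + wt (Λ u) 1 + wt (Λ u) 2) :
    ∑ u ∈ τ, wt (Λ u) 3 * cochain2 Λ (τ.erase u) = ∑ u ∈ τ, cochain2 Λ (τ.erase u) := by
  obtain ⟨a, σ, ha, rfl, hσ⟩ := Finset.card_eq_succ.1 hτ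
  obtain ⟨b, c, d, hbc, hbd, hcd, rfl⟩ := Finset.card_eq_three.1 hσ
  have hab : a ≠ b := by rintro rfl; simp at ha
  have hac : a ≠ c := by rintro rfl; simp at ha
  have had : a ≠ d := by rintro rfl; simp at ha
  have e1 : ({a, b, c, d} : Finset (Fin 4 → ℝ)).erase a = {b, c, d} := by ext; simp; grind
  have e2 : ({a, b, c, d} : Finset (Fin 4 → ℝ)).erase b = {a, c, d} := by ext; simp; grind
  have e3 : ({a, b, c, d} : Finset (Fin 4 → ℝ)).erase c = {a, b, d} := by ext; simp; grind
  have e4 : ({a, b, c, d} : Finset (Fin 4 → ℝ)).erase d = {a, b, c} := by ext; simp; grind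
  have hb' : b ∉ ({c, d} : Finset (Fin 4 → ℝ)) := by simp [hbc, hbd]
  rw [Finset.sum_insert ha, Finset.sum_insert hb', Finset.sum_pair hcd,
    Finset.sum_insert ha, Finset.sum_insert hb', Finset.sum_pair hcd, e1, e2, e3, e4,
    cochain2_triple hbc hbd hcd, cochain2_triple hac had hcd, cochain2_triple hab had hbd,
    cochain2_triple hab hac hbc, h3 a (by simp), h3 b (by simp), h3 c (by simp), h3 d (by simp)]
  simp only [det3]
  ring_nf
  reduce_mod_char

/-- A tetrahedron contributing to the weighted count is fully labeled. -/
lemma exists_labeling {τ : Finset (Fin 4 → ℝ)}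
    (h : ∑ u ∈ τ, wt (Λ u) 3 * cochain2 Λ (τ.erase u) ≠ 0) :
    τ.card = 4 → ∃ ℓ : (Fin 4 → ℝ) → Fin 4, Set.InjOn ℓ ↑τ ∧ ∀ u ∈ τ, ℓ u ∈ Λ u := by
  intro hτ
  obtain ⟨w, hw, hw'⟩ := Finset.exists_ne_zero_of_sum_ne_zero h
  obtain ⟨x, hx, hx'⟩ := Finset.exists_ne_zero_of_sum_ne_zero (right_ne_zero_of_mul hw')
  obtain ⟨y, hy, hy'⟩ := Finset.exists_ne_zero_of_sum_ne_zero hx'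
  obtain ⟨z, hz, hz'⟩ := Finset.exists_ne_zero_of_sum_ne_zero hy'
  have h3 := mem_of_wt_ne_zero _ _ (left_ne_zero_of_mul hw')
  have h2 := mem_of_wt_ne_zero _ _ (right_ne_zero_of_mul hz')
  have h1 := mem_of_wt_ne_zero _ _ (right_ne_zero_of_mul (left_ne_zero_of_mul hz'))
  have h0 := mem_of_wt_ne_zero _ _ (left_ne_zero_of_mul (left_ne_zero_of_mul hz'))
  simp only [Finset.mem_erase] at hx hy hz
  have hsub : ({w, x, y, z} : Finset (Fin 4 → ℝ)) = τ := by
    refine Finset.eq_of_subset_of_card_le ?_ ?_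
    · intro v hv
      simp only [Finset.mem_insert, Finset.mem_singleton] at hv
      grind
    · rw [hτ, Finset.card_insert_of_notMem (by simp; grind),
        Finset.card_insert_of_notMem (by simp; grind), Finset.card_pair (by grind)]
  have hv : ∀ v ∈ τ, v = w ∨ v = x ∨ v = y ∨ v = z := by
    intro v hv
    simpa [← hsub] using hv
  refine ⟨fun v => if v = w then 3 else if v = x then 0 else if v = y then 1 else 2, ?_, ?_⟩
  · intro u hu v hv' huv
    have hu := hv u hu
    have hv' := hv v hv'
    simp only at huv
    grind
  · intro u hu
    have hu := hv u hu
    simp only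
    grind

end Cochains

/-! ### Labels of the vertices of a face -/

section Labels

variable {T : Triangulation 4} {Λ : (Fin 4 → ℝ) → Finset (Fin 4)}

lemma mem_vertices {σ : Finset (Fin 4 → ℝ)} (hσ : σ ∈ T.complex.faces) {u : Fin 4 → ℝ}
    (hu : u ∈ σ) : u ∈ T.complex.vertices :=
  T.complex.down_closed hσ (by simpa using hu) (Finset.singleton_nonempty u)

lemma onFace_of_mem
    (hΛ : ∀ v ∈ T.complex.vertices, (Λ v).Nonempty ∧
      (Λ v = Jset v ∨ ∃ ℓ : Fin 4, ℓ ∉ Jset v ∧ Λ v = {ℓ}))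
    {σ : Finset (Fin 4 → ℝ)} (hσ : σ ∈ T.complex.faces) {u : Fin 4 → ℝ} (hu : u ∈ σ)
    {S : Finset (Fin 4)} (hS : ∀ i ∈ S, u i = 0) : OnFace S (Λ u) := by
  obtain ⟨hne, h⟩ := hΛ u (mem_vertices hσ hu)
  have hsub : S ⊆ Jset u := fun i hi => by simp [Jset, hS i hi]
  refine ⟨hne, ?_⟩
  rcases h with h | ⟨ℓ, hℓ, h⟩
  · left
    rw [h]
    refine ⟨hsub, fun huniv => ?_⟩
    have h0 : ∀ i, u i = 0 := fun i => by
      have : i ∈ Jset u := huniv ▸ Finset.mem_univ i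
      simpa [Jset] using this
    have := (T.mem_simplex hσ hu).2
    simp [h0] at this
  · right
    rw [h]
    exact ⟨Finset.card_singleton ℓ, Finset.disjoint_singleton_right.2 fun h => hℓ (hsub h)⟩

lemma compat_of_mem
    (hsupp : ∀ u v : Fin 4 → ℝ, ({u, v} : Finset (Fin 4 → ℝ)) ∈ T.complex.faces →
      {i | u i ≠ 0} ⊆ {i | v i ≠ 0} ∨ {i | v i ≠ 0} ⊆ {i | u i ≠ 0})
    (hΛ : ∀ v ∈ T.complex.vertices, (Λ v).Nonempty ∧
      (Λ v = Jset v ∨ ∃ ℓ : Fin 4, ℓ ∉ Jset v ∧ Λ v = {ℓ}))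
    {σ : Finset (Fin 4 → ℝ)} (hσ : σ ∈ T.complex.faces) {u v : Fin 4 → ℝ} (hu : u ∈ σ)
    (hv : v ∈ σ) : Compat (Λ u) (Λ v) := by
  have hJ : ∀ x y : Fin 4 → ℝ, {i | x i ≠ 0} ⊆ {i | y i ≠ 0} → Jset y ⊆ Jset x := by
    intro x y h i hi
    simp only [Jset, Finset.mem_filter, Finset.mem_univ, true_and] at hi ⊢
    by_contra hx
    exact h hx hi
  rcases (hΛ u (mem_vertices hσ hu)).2 with h | ⟨ℓ, -, h⟩
  · rcases (hΛ v (mem_vertices hσ hv)).2 with h' | ⟨ℓ, -, h'⟩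
    · have hedge : ({u, v} : Finset (Fin 4 → ℝ)) ∈ T.complex.faces :=
        T.complex.down_closed hσ (by
          intro x hx
          simp only [Finset.mem_insert, Finset.mem_singleton] at hx
          rcases hx with rfl | rfl <;> assumption) (Finset.insert_nonempty _ _)
      rw [h, h']
      rcases hsupp u v hedge with h | h
      · exact Or.inr (Or.inr (Or.inr (hJ _ _ h)))
      · exact Or.inr (Or.inr (Or.inl (hJ _ _ h)))
    · exact Or.inr (Or.inl (by rw [h', Finset.card_singleton]; norm_num))
  · exact Or.inl (by rw [h, Finset.card_singleton]; norm_num)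

end Labels

/-! ### Folding the boundary -/

theorem sperner_symmetry_four
    (T : Triangulation 4) (hT : T.IsNice)
    (hsupp : ∀ u v : Fin 4 → ℝ, ({u, v} : Finset (Fin 4 → ℝ)) ∈ T.complex.faces →
      {i | u i ≠ 0} ⊆ {i | v i ≠ 0} ∨ {i | v i ≠ 0} ⊆ {i | u i ≠ 0})
    (Λ : (Fin 4 → ℝ) → Finset (Fin 4)) (hnice : NiceLabeling T Λ)
    (hΛ : ∀ v ∈ T.complex.vertices, (Λ v).Nonempty ∧
      (Λ v = Jset v ∨ ∃ ℓ : Fin 4, ℓ ∉ Jset v ∧ Λ v = {ℓ})) :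
    ∃ τ ∈ T.complex.faces, τ.card = 4 ∧
      ∃ ℓ : (Fin 4 → ℝ) → Fin 4, Set.InjOn ℓ ↑τ ∧ ∀ u ∈ τ, ℓ u ∈ Λ u := by
  have on {σ u S} (hσ : σ ∈ T.complex.faces) (hu : u ∈ σ) (hS : ∀ i ∈ S, u i = 0) :
      OnFace S (Λ u) := onFace_of_mem hΛ hσ hu hS
  have co {σ u v} (hσ : σ ∈ T.complex.faces) (hu : u ∈ σ) (hv : v ∈ σ) :
      Compat (Λ u) (Λ v) := compat_of_mem hsupp hΛ hσ hu hv
  have im {σ u} (j : Fin 4) (hσ : σ ∈ T.complex.faces) (hu : u ∈ σ) (h0 : u 0 = 0) :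
      Λ (rmap j u) = (Λ u).image (rho j) := hnice j u (mem_vertices hσ hu) h0
  suffices hmain : ∑ τ ∈ T.cells Finset.univ, ∑ u ∈ τ, cochain2 Λ (τ.erase u) = 1 by
    obtain ⟨τ, hτ, hne⟩ := Finset.exists_ne_zero_of_sum_ne_zero (hmain.trans_ne one_ne_zero)
    obtain ⟨hτf, hcard, -⟩ := T.mem_cells.1 hτ
    rw [← sum_cochain2 hcard fun u hu => wt_sum _ (on hτf hu (by simp))] at hne
    exact ⟨τ, hτf, hcard, exists_labeling hne hcard⟩
  -- the boundary of the tetrahedron, folded onto its `0`-facet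
  have hfacet : ∑ τ ∈ T.cells Finset.univ, ∑ u ∈ τ, cochain2 Λ (τ.erase u) =
      ∑ σ ∈ T.cells {1, 2, 3}, ∑ u ∈ σ, cochain1 Λ (σ.erase u) := by
    rw [T.sum_coboundary (by decide), Finset.sum_congr rfl fun j _ =>
      hT.sum_cells_image (S := {1, 2, 3}) j (by decide) (by revert j; decide +kernel) (cochain2 Λ),
      Finset.sum_comm]
    refine Finset.sum_congr rfl fun σ hσ => ?_
    obtain ⟨hσf, hcard, hσS⟩ := T.mem_cells.1 hσ
    obtain ⟨a, b, c, hab, hac, hbc, rfl⟩ := Finset.card_eq_three.1 (hcard.trans (by decide))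
    have h0 : ∀ x ∈ ({a, b, c} : Finset (Fin 4 → ℝ)), x 0 = 0 := fun x hx =>
      mem_coordSpan.1 (hσS x hx) 0 (by decide)
    have ha : a ∈ ({a, b, c} : Finset (Fin 4 → ℝ)) := by simp
    have hb : b ∈ ({a, b, c} : Finset (Fin 4 → ℝ)) := by simp
    have hc : c ∈ ({a, b, c} : Finset (Fin 4 → ℝ)) := by simp
    rw [sum_erase_triple hab hac hbc, cochain1_pair hab, cochain1_pair hac, cochain1_pair hbc,
      add_comm, add_comm (det2 (Λ b) (Λ c)), ← add_assoc,
      ← sum_det3 _ (on hσf ha (by simpa using h0 a ha)) _ (on hσf hb (by simpa using h0 b hb))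
        (co hσf ha hb) _ (on hσf hc (by simpa using h0 c hc)) (co hσf ha hc) (co hσf hb hc)]
    refine Finset.sum_congr rfl fun j _ => ?_
    have hinj := rmap_injective j
    rw [Finset.image_insert, Finset.image_insert, Finset.image_singleton,
      cochain2_triple (hinj.ne hab) (hinj.ne hac) (hinj.ne hbc), im j hσf ha (h0 a ha),
      im j hσf hb (h0 b hb), im j hσf hc (h0 c hc)]
  -- the boundary of the `0`-facet, folded onto the edge from `e_2` to `e_3`
  have hedge : ∑ σ ∈ T.cells {1, 2, 3}, ∑ u ∈ σ, cochain1 Λ (σ.erase u) =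
      ∑ σ ∈ T.cells {2, 3}, ∑ u ∈ σ, cochain0 Λ (σ.erase u) := by
    rw [T.sum_coboundary (by decide), Finset.sum_insert (by decide), Finset.sum_pair (by decide),
      show ({1, 2, 3} : Finset (Fin 4)).erase 1 = {2, 3} by decide,
      hT.sum_cells_image (S := {2, 3}) (S' := ({1, 2, 3} : Finset (Fin 4)).erase 2) 2 (by decide)
        (by decide +kernel) (cochain1 Λ),
      hT.sum_cells_image (S := {2, 3}) (S' := ({1, 2, 3} : Finset (Fin 4)).erase 3) 3 (by decide)
        (by decide +kernel) (cochain1 Λ), ← add_assoc, ← Finset.sum_add_distrib,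
      ← Finset.sum_add_distrib]
    refine Finset.sum_congr rfl fun σ hσ => ?_
    obtain ⟨hσf, hcard, hσS⟩ := T.mem_cells.1 hσ
    obtain ⟨a, b, hab, rfl⟩ := Finset.card_eq_two.1 (hcard.trans (by decide))
    have h0 : ∀ x ∈ ({a, b} : Finset (Fin 4 → ℝ)), ∀ i ∈ ({0, 1} : Finset (Fin 4)), x i = 0 :=
      fun x hx i hi => mem_coordSpan.1 (hσS x hx) i (by revert i; decide)
    have ha : a ∈ ({a, b} : Finset (Fin 4 → ℝ)) := by simp
    have hb : b ∈ ({a, b} : Finset (Fin 4 → ℝ)) := by simp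
    have hpair (j : Fin 4) : cochain1 Λ (({a, b} : Finset (Fin 4 → ℝ)).image (rmap j)) =
        det2 ((Λ a).image (rho j)) ((Λ b).image (rho j)) := by
      rw [Finset.image_insert, Finset.image_singleton, cochain1_pair ((rmap_injective j).ne hab),
        im j hσf ha (h0 a ha 0 (by simp)), im j hσf hb (h0 b hb 0 (by simp))]
    rw [hpair, hpair, cochain1_pair hab, sum_erase_pair hab, cochain0_singleton,
      cochain0_singleton, add_comm (det1 (Λ b)),
      sum_det2 _ (on hσf ha (h0 a ha)) _ (on hσf hb (h0 b hb)) (co hσf ha hb)]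
  -- the endpoints of the edge, folded onto `e_3`
  have hvertex : ∑ σ ∈ T.cells {2, 3}, ∑ u ∈ σ, cochain0 Λ (σ.erase u) = 1 := by
    have he : ({Pi.single 3 1} : Finset (Fin 4 → ℝ)) ∈ T.complex.faces :=
      (T.mem_cells.1 (T.cells_singleton 3 ▸ Finset.mem_singleton_self _)).1
    rw [T.sum_coboundary (by decide), Finset.sum_pair (by decide),
      show ({2, 3} : Finset (Fin 4)).erase 2 = {3} by decide,
      hT.sum_cells_image (S := {3}) (S' := ({2, 3} : Finset (Fin 4)).erase 3) 3 (by decide)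
        (by decide +kernel) (cochain0 Λ), T.cells_singleton, Finset.sum_singleton,
      Finset.sum_singleton, Finset.image_singleton, cochain0_singleton, cochain0_singleton,
      im 3 he (Finset.mem_singleton_self _) (by simp)]
    exact sum_det1 _ (on he (Finset.mem_singleton_self _) (by simp))
  rw [hfacet, hedge, hvertex]
end
end

section
/- Let T be a triangulation of Δ^{n−1}, coherently oriented in the sense that each (n−1)-dimensional simplex τ of T is given an ordering v_1^τ,…,v_n^τ of its vertices with det(v_1^τ,…,v_n^τ) > 0 (the determinant of the n×n matrix whose columns are these points of ℝ^n). Let λ : V(T) → Δ^{n−1} be a map such that for every vertex v of T, the point λ(v) lies in the affine hull of supp(v). Then |Σ_τ det(λ(v_1^τ),…,λ(v_n^τ))| = 1, where the sum runs over all (n−1)-dimensional simplices τ of T. -/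
/-!
The sum of determinants does not depend on the labelling, and for the identity labelling it
compares volumes.

*Independence of the labelling* (`detSum_eq_detSum_id`). Labels are moved one vertex `v` at a time.
Moving the label of `v` by `w` changes the sum by the determinants, over the simplices containing
`v`, in which the label of `v` is replaced by `w`. As `w` has coordinate sum `0` and the other
labels have coordinate sum `1`, such a determinant equals the sum over the other vertices `u` of the
determinants in which the label of `u` is replaced by a fixed basis vector `a = e_j` with
`v_j ≠ 0` (`det_eq_sum_updateCol`). These terms are indexed by a simplex together with a
codimension-one face of it that contains `v`. If the face lies in a coordinate hyperplane `x_i = 0`,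
then `v_i = 0` and row `i` of the matrix vanishes. Otherwise there is exactly one neighbouring
simplex across the face (`exists_opposite`, `opposite_unique`), it induces the opposite orientation
(`det_opposite`), and the two terms cancel. The geometric input behind both facts is that two
simplices on the same side of a common codimension-one face coincide (`coord_not_pos`).

*The identity labelling* (`detSum_id`). The cones `conv (0, τ)` over the simplices `τ` tile the
corner `conv (0, e_1, …, e_n)` up to null sets, and each is the image of that corner under the
matrix of vertices of `τ`, so that the determinants of these matrices add up to `1`.
-/


open scoped Classical
noncomputable section

open Finset Filter Topology MeasureTheory

/-! ### Simplices and barycentric coordinates -/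

/-- The set of `(n-1)`-dimensional simplices of a triangulation. -/
def tops {n : ℕ} (T : Triangulation n) : Finset (Finset (Fin n → ℝ)) :=
  T.finite.toFinset.filter fun σ => σ.card = n

/-- `ord` is a coherent orientation of `T`. -/
def Oriented {n : ℕ} (T : Triangulation n)
    (ord : Finset (Fin n → ℝ) → Fin n → (Fin n → ℝ)) : Prop :=
  ∀ σ ∈ T.complex.faces, σ.card = n →
    (∀ k, ord σ k ∈ σ) ∧ Function.Injective (ord σ) ∧
      0 < Matrix.det (Matrix.of fun i k => ord σ k i)

/-- The matrix whose columns are the images under `μ` of the ordered vertices of `σ`. -/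
def colMat {n : ℕ} (ord : Finset (Fin n → ℝ) → Fin n → (Fin n → ℝ))
    (μ : (Fin n → ℝ) → (Fin n → ℝ)) (σ : Finset (Fin n → ℝ)) : Matrix (Fin n) (Fin n) ℝ :=
  Matrix.of fun i k => μ (ord σ k) i

/-- A labelling is admissible if it sends each vertex `v` into the affine hull of the
supporting face of `v`, described by its equations. -/
def Admissible {n : ℕ} (T : Triangulation n) (μ : (Fin n → ℝ) → (Fin n → ℝ)) : Prop :=
  ∀ v ∈ T.complex.vertices, ∑ i, μ v i = 1 ∧ ∀ i, v i = 0 → μ v i = 0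

section
variable {n : ℕ} {T : Triangulation n} {ord : Finset (Fin n → ℝ) → Fin n → (Fin n → ℝ)}

lemma mem_tops {σ : Finset (Fin n → ℝ)} :
    σ ∈ tops T ↔ σ ∈ T.complex.faces ∧ σ.card = n := by
  simp [tops]

lemma face_subset_stdSimplex {σ : Finset (Fin n → ℝ)} (hσ : σ ∈ T.complex.faces)
    {v : Fin n → ℝ} (hv : v ∈ σ) : v ∈ stdSimplex ℝ (Fin n) :=
  T.space_eq ▸ T.complex.subset_space hσ hv

lemma mem_vertices_of_mem {σ : Finset (Fin n → ℝ)} (hσ : σ ∈ T.complex.faces)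
    {v : Fin n → ℝ} (hv : v ∈ σ) : v ∈ T.complex.vertices :=
  T.complex.down_closed hσ (Finset.singleton_subset_iff.2 hv) (Finset.singleton_nonempty _)

lemma Oriented.det_pos (h : Oriented T ord) {σ : Finset (Fin n → ℝ)} (hσ : σ ∈ tops T) :
    0 < (colMat ord id σ).det :=
  (h σ (mem_tops.1 hσ).1 (mem_tops.1 hσ).2).2.2

lemma Oriented.mem (h : Oriented T ord) {σ : Finset (Fin n → ℝ)} (hσ : σ ∈ tops T)
    (k : Fin n) : ord σ k ∈ σ :=
  (h σ (mem_tops.1 hσ).1 (mem_tops.1 hσ).2).1 k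

lemma Oriented.inj (h : Oriented T ord) {σ : Finset (Fin n → ℝ)} (hσ : σ ∈ tops T) :
    Function.Injective (ord σ) :=
  (h σ (mem_tops.1 hσ).1 (mem_tops.1 hσ).2).2.1

lemma Oriented.image_eq (h : Oriented T ord) {σ : Finset (Fin n → ℝ)} (hσ : σ ∈ tops T) :
    Finset.univ.image (ord σ) = σ := by
  apply Finset.eq_of_subset_of_card_le
  · intro x hx
    obtain ⟨k, -, rfl⟩ := Finset.mem_image.1 hx
    exact h.mem hσ k
  · rw [Finset.card_image_of_injective _ (h.inj hσ), (mem_tops.1 hσ).2]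
    simp

lemma Oriented.exists_eq (h : Oriented T ord) {σ : Finset (Fin n → ℝ)} (hσ : σ ∈ tops T)
    {v : Fin n → ℝ} (hv : v ∈ σ) : ∃ k, ord σ k = v := by
  rw [← h.image_eq hσ] at hv
  simpa using hv

/-- A linear functional proportional to the barycentric coordinate at the vertex `ord σ k`. -/
def coord (ord : Finset (Fin n → ℝ) → Fin n → (Fin n → ℝ)) (σ : Finset (Fin n → ℝ))
    (k : Fin n) : (Fin n → ℝ) →ₗ[ℝ] ℝ :=
  LinearMap.proj k ∘ₗ (colMat ord id σ).cramer

lemma coord_self (σ : Finset (Fin n → ℝ)) (k : Fin n) :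
    coord ord σ k (ord σ k) = (colMat ord id σ).det := by
  have := Matrix.cramer_row_self (colMat ord id σ) (ord σ k) k (fun j => rfl)
  simp [coord, this]

lemma coord_ne (σ : Finset (Fin n → ℝ)) {k l : Fin n} (hkl : l ≠ k) :
    coord ord σ k (ord σ l) = 0 := by
  have := Matrix.cramer_row_self (colMat ord id σ) (ord σ l) l (fun j => rfl)
  simp [coord, this, hkl.symm]

lemma Oriented.coord_eq_zero (h : Oriented T ord) {σ : Finset (Fin n → ℝ)} (hσ : σ ∈ tops T)
    {k : Fin n} {r : Fin n → ℝ} (hr : r ∈ σ) (hrk : r ≠ ord σ k) : coord ord σ k r = 0 := by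
  obtain ⟨l, rfl⟩ := h.exists_eq hσ hr
  exact coord_ne σ (fun e => hrk (by rw [e]))

lemma det_smul_eq_sum_coord (σ : Finset (Fin n → ℝ)) (x : Fin n → ℝ) :
    (colMat ord id σ).det • x = ∑ k, coord ord σ k x • ord σ k := by
  rw [← Matrix.mulVec_cramer, Matrix.mulVec_eq_sum]
  refine Finset.sum_congr rfl fun k _ => ?_
  ext i
  simp [coord, colMat, mul_comm]

lemma coord_eq_det (h : Oriented T ord) {σ : Finset (Fin n → ℝ)} (hσ : σ ∈ tops T)
    (k : Fin n) (x : Fin n → ℝ) :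
    coord ord σ k x = (colMat ord (Function.update id (ord σ k) x) σ).det := by
  simp only [coord, LinearMap.comp_apply, LinearMap.proj_apply, Matrix.cramer_apply]
  congr 1
  ext i l
  by_cases hl : l = k
  · subst hl; simp [colMat]
  · simp [colMat, hl, (h.inj hσ).ne hl]

lemma eq_zero_of_mem_convexHull (f : (Fin n → ℝ) →ₗ[ℝ] ℝ) {s : Set (Fin n → ℝ)}
    (hs : ∀ x ∈ s, f x = 0) {x : Fin n → ℝ} (hx : x ∈ convexHull ℝ s) : f x = 0 := by
  have : convexHull ℝ s ⊆ (LinearMap.ker f : Set (Fin n → ℝ)) :=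
    convexHull_min (fun y hy => hs y hy) (Submodule.convex _)
  exact this hx

/-! ### Adjacent simplices -/

/-- Two simplices on the same side of a common codimension-one face coincide: if the vertices
`u` and `u'` were different, a point close to the barycentre of the common face would lie in the
interior of both simplices. -/
lemma coord_not_pos (h : Oriented T ord) {τ τ' : Finset (Fin n → ℝ)} (hτ : τ ∈ tops T)
    (hτ' : τ' ∈ tops T) {k : Fin n} {u' : Fin n → ℝ} (hu' : u' ∈ τ')
    (he : τ'.erase u' = τ.erase (ord τ k)) (hne : u' ≠ ord τ k) :
    ¬ 0 < coord ord τ k u' := by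
  intro hpos
  have hd := h.det_pos hτ
  set d := (colMat ord id τ).det with hdd
  have hsum := det_smul_eq_sum_coord (ord := ord) τ u'
  set c := fun l => coord ord τ l u' with hc
  obtain ⟨N, hN⟩ : ∃ N : ℝ, 0 ≤ N ∧ ∀ l, 0 ≤ N + c l := by
    refine ⟨∑ l, |c l|, Finset.sum_nonneg fun _ _ => abs_nonneg _, fun l => ?_⟩
    have := Finset.single_le_sum (f := fun l => |c l|) (fun _ _ => abs_nonneg _)
      (Finset.mem_univ l)
    have h2 := neg_abs_le (c l)
    linarith
  -- the unnormalised common point of the two simplices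
  set y : Fin n → ℝ := d • u' + ∑ l ∈ Finset.univ.erase k, N • ord τ l with hy
  have hρ : ∀ l, l ≠ k → ord τ l ∈ τ' := by
    intro l hl
    have : ord τ l ∈ τ'.erase u' := by
      rw [he]; exact Finset.mem_erase.2 ⟨(h.inj hτ).ne hl, h.mem hτ l⟩
    exact Finset.mem_of_mem_erase this
  have hy2 : y = ∑ l, (if l = k then c k else N + c l) • ord τ l := by
    rw [hy, hsum, ← Finset.add_sum_erase _ _ (Finset.mem_univ k),
      ← Finset.add_sum_erase (a := k) (s := Finset.univ)
        (f := fun l => (if l = k then c k else N + c l) • ord τ l) (Finset.mem_univ k), add_assoc,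
      ← Finset.sum_add_distrib]
    simp only [if_true]
    congr 1
    refine Finset.sum_congr rfl fun l hl => ?_
    rw [if_neg (Finset.ne_of_mem_erase hl), add_comm, add_smul]
  set S : ℝ := d + ∑ l ∈ Finset.univ.erase k, N with hS
  have hSpos : 0 < S := by
    have : 0 ≤ ∑ l ∈ Finset.univ.erase k, N := Finset.sum_nonneg fun _ _ => hN.1
    linarith
  have hone : ∀ σ ∈ tops T, ∀ v ∈ σ, ∑ i, v i = 1 := fun σ hσ v hv =>
    (face_subset_stdSimplex (mem_tops.1 hσ).1 hv).2
  have hS2 : S = ∑ l, (if l = k then c k else N + c l) := by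
    have e1 : ∑ i, y i = S := by
      simp only [hy, Pi.add_apply, Finset.sum_apply, Pi.smul_apply, smul_eq_mul,
        Finset.sum_add_distrib]
      rw [Finset.sum_comm]
      simp_rw [← Finset.mul_sum]
      rw [hone τ' hτ' u' hu']
      simp_rw [hone τ hτ _ (h.mem hτ _)]
      simp [hS, mul_comm]
    have e2 : ∑ i, y i = ∑ l, (if l = k then c k else N + c l) := by
      rw [hy2]
      simp only [Finset.sum_apply, Pi.smul_apply, smul_eq_mul]
      rw [Finset.sum_comm]
      simp_rw [← Finset.mul_sum, hone τ hτ _ (h.mem hτ _), mul_one]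
    rw [← e1, e2]
  have m1 : S⁻¹ • y ∈ convexHull ℝ (τ : Set (Fin n → ℝ)) := by
    rw [hy2, Finset.smul_sum]
    simp_rw [smul_smul]
    refine (convex_convexHull ℝ _).sum_mem (fun l _ => ?_) ?_
      (fun l _ => subset_convexHull ℝ _ (h.mem hτ l))
    · refine mul_nonneg (inv_nonneg.2 hSpos.le) ?_
      split_ifs
      exacts [hpos.le, hN.2 l]
    · rw [← Finset.mul_sum, ← hS2, inv_mul_cancel₀ hSpos.ne']
  have m2 : S⁻¹ • y ∈ convexHull ℝ (τ' : Set (Fin n → ℝ)) := by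
    have hy3 : y = ∑ l, (if l = k then d else N) • (if l = k then u' else ord τ l) := by
      rw [hy, ← Finset.add_sum_erase _ _ (Finset.mem_univ k)]
      simp only [if_true]
      congr 1
      refine Finset.sum_congr rfl fun l hl => ?_
      simp [Finset.ne_of_mem_erase hl]
    have hS3 : S = ∑ l, (if l = k then d else N) := by
      rw [hS, ← Finset.add_sum_erase _ _ (Finset.mem_univ k)]
      simp only [if_true]
      congr 1
      refine Finset.sum_congr rfl fun l hl => ?_
      simp [Finset.ne_of_mem_erase hl]
    rw [hy3, Finset.smul_sum]
    simp_rw [smul_smul]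
    refine (convex_convexHull ℝ _).sum_mem (fun l _ => ?_) ?_
      (fun l _ => subset_convexHull ℝ _ ?_)
    · refine mul_nonneg (inv_nonneg.2 hSpos.le) ?_
      split_ifs
      exacts [hd.le, hN.1]
    · rw [← Finset.mul_sum, ← hS3, inv_mul_cancel₀ hSpos.ne']
    · by_cases hl : l = k
      · simpa [hl] using hu'
      · simpa [hl] using hρ l hl
  have m3 := T.complex.inter_subset_convexHull (mem_tops.1 hτ).1 (mem_tops.1 hτ').1 ⟨m1, m2⟩
  have z : coord ord τ k (S⁻¹ • y) = 0 := by
    refine eq_zero_of_mem_convexHull _ (fun x hx => ?_) m3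
    have hx1 : x ∈ τ := hx.1
    have hx2 : x ∈ τ' := hx.2
    refine h.coord_eq_zero hτ hx1 (fun e => ?_)
    have : x ∈ τ'.erase u' := Finset.mem_erase.2 ⟨by rw [e]; exact hne.symm, hx2⟩
    rw [he] at this
    exact (Finset.ne_of_mem_erase this) e
  rw [map_smul, hy, map_add, map_smul, map_sum] at z
  rw [Finset.sum_eq_zero (fun l hl => by
    rw [map_smul, coord_ne τ (Finset.ne_of_mem_erase hl), smul_zero])] at z
  have : 0 < S⁻¹ • (d • coord ord τ k u' + 0) := by
    simp only [smul_eq_mul, add_zero]; positivity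
  linarith

/-- Every codimension-one face `τ \ {ord τ k}` not contained in a coordinate hyperplane has a
second top-dimensional simplex on its other side: points just beyond its barycentre, away from
`ord τ k`, still lie in the standard simplex. -/
lemma exists_opposite (h : Oriented T ord) {τ : Finset (Fin n → ℝ)} (hτ : τ ∈ tops T)
    {k : Fin n} (hne : (τ.erase (ord τ k)).Nonempty)
    (hint : ∀ i, ∃ r ∈ τ.erase (ord τ k), r i ≠ 0) :
    ∃ τ' ∈ tops T, ∃ u' ∈ τ', τ'.erase u' = τ.erase (ord τ k) ∧ u' ≠ ord τ k := by
  set ρ := τ.erase (ord τ k) with hρ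
  have hd := h.det_pos hτ
  have hρτ : ∀ r ∈ ρ, r ∈ τ := fun r hr => Finset.mem_of_mem_erase hr
  have hstd : ∀ r ∈ ρ, r ∈ stdSimplex ℝ (Fin n) := fun r hr =>
    face_subset_stdSimplex (mem_tops.1 hτ).1 (hρτ r hr)
  have hustd := face_subset_stdSimplex (mem_tops.1 hτ).1 (h.mem hτ k)
  have hcard : (0 : ℝ) < ρ.card := by exact_mod_cast hne.card_pos
  set x : Fin n → ℝ := ∑ r ∈ ρ, (ρ.card : ℝ)⁻¹ • r with hx
  have hxρ : x ∈ convexHull ℝ (ρ : Set (Fin n → ℝ)) :=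
    (convex_convexHull ℝ _).sum_mem (fun _ _ => by positivity)
      (by rw [Finset.sum_const, nsmul_eq_mul, mul_inv_cancel₀ hcard.ne'])
      (fun r hr => subset_convexHull ℝ _ hr)
  have hxstd : x ∈ stdSimplex ℝ (Fin n) :=
    convexHull_min (fun r hr => hstd r hr) (convex_stdSimplex ℝ _) hxρ
  have hxpos : ∀ i, 0 < x i := by
    intro i
    obtain ⟨r, hr, hri⟩ := hint i
    have : x i = ∑ r ∈ ρ, (ρ.card : ℝ)⁻¹ * r i := by simp [hx, Finset.sum_apply]
    rw [this]
    refine Finset.sum_pos' (fun s hs => mul_nonneg (by positivity) ((hstd s hs).1 i))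
      ⟨r, hr, mul_pos (by positivity) (lt_of_le_of_ne ((hstd r hr).1 i) hri.symm)⟩
  let y : ℝ → Fin n → ℝ := fun ε => x + ε • (x - ord τ k)
  have hycont : Tendsto y (𝓝[>] 0) (𝓝 x) := by
    have : Continuous y := by fun_prop
    have h2 := (this.tendsto 0).mono_left (nhdsWithin_le_nhds (s := Set.Ioi (0 : ℝ)))
    simpa [y] using h2
  have hyev : ∀ᶠ ε in 𝓝[>] (0 : ℝ), y ε ∈ stdSimplex ℝ (Fin n) := by
    have hpos : ∀ᶠ ε in 𝓝[>] (0 : ℝ), ∀ i, 0 < y ε i := by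
      rw [Filter.eventually_all]
      intro i
      have := (continuous_apply i).continuousAt.tendsto.comp hycont
      exact this.eventually (lt_mem_nhds (hxpos i))
    filter_upwards [hpos] with ε hε
    refine ⟨fun i => (hε i).le, ?_⟩
    simp only [y, Pi.add_apply, Pi.smul_apply, Pi.sub_apply, smul_eq_mul, Finset.sum_add_distrib,
      ← Finset.mul_sum, Finset.sum_sub_distrib, hxstd.2, hustd.2]
    ring
  have hyτ : ∀ᶠ ε in 𝓝[>] (0 : ℝ), ∃ σ ∈ tops T, y ε ∈ convexHull ℝ (σ : Set (Fin n → ℝ)) := by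
    filter_upwards [hyev] with ε hε
    rw [← T.space_eq, Geometry.SimplicialComplex.mem_space_iff] at hε
    obtain ⟨σ, hσ, hm⟩ := hε
    obtain ⟨σ', hσ', hsub, hc⟩ := T.pure σ hσ
    exact ⟨σ', mem_tops.2 ⟨hσ', hc⟩, convexHull_mono (by exact_mod_cast hsub) hm⟩
  -- one of the finitely many simplices contains these points for arbitrarily small `ε`
  obtain ⟨τ', hτ', hfreq⟩ : ∃ τ' ∈ tops T,
      ∃ᶠ ε in 𝓝[>] (0 : ℝ), y ε ∈ convexHull ℝ (τ' : Set (Fin n → ℝ)) := by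
    by_contra hcon
    push Not at hcon
    have := (Filter.eventually_all_finset (tops T)).2 hcon
    obtain ⟨ε, h1, σ, hσ, h2⟩ := (this.and hyτ).exists
    exact h1 σ hσ h2
  have hxτ' : x ∈ convexHull ℝ (τ' : Set (Fin n → ℝ)) :=
    (τ'.finite_toSet.isClosed_convexHull ℝ).mem_of_frequently_of_tendsto hfreq hycont
  have hxρτ' : x ∈ convexHull ℝ ((τ : Set (Fin n → ℝ)) ∩ τ') :=
    T.complex.inter_subset_convexHull (mem_tops.1 hτ).1 (mem_tops.1 hτ').1
      ⟨convexHull_mono (by exact_mod_cast Finset.erase_subset _ _) hxρ, hxτ'⟩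
  have hsub : ρ ⊆ τ' := by
    intro r hr
    by_contra hrτ'
    obtain ⟨l, rfl⟩ := h.exists_eq hτ (hρτ r hr)
    have h0 : coord ord τ l x = 0 := by
      refine eq_zero_of_mem_convexHull _ (fun s hs => ?_) hxρτ'
      exact h.coord_eq_zero hτ hs.1 (fun e => hrτ' (e ▸ hs.2))
    rw [hx, map_sum, Finset.sum_eq_single_of_mem _ hr
      (fun s hs hsr => by rw [map_smul, h.coord_eq_zero hτ (hρτ s hs) hsr, smul_zero]),
      map_smul, coord_self] at h0
    have : 0 < (ρ.card : ℝ)⁻¹ • (colMat ord id τ).det := by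
      rw [smul_eq_mul]; positivity
    exact this.ne' h0
  have hρcard : ρ.card + 1 = n := by
    rw [hρ, Finset.card_erase_add_one (h.mem hτ k), (mem_tops.1 hτ).2]
  obtain ⟨u', hu'τ, hu'ρ⟩ : ∃ u' ∈ τ', u' ∉ ρ := by
    apply Finset.exists_mem_notMem_of_card_lt_card
    rw [(mem_tops.1 hτ').2]; omega
  have her : τ'.erase u' = ρ := by
    symm
    apply Finset.eq_of_subset_of_card_le
    · intro r hr
      exact Finset.mem_erase.2 ⟨fun e => hu'ρ (e ▸ hr), hsub hr⟩
    · rw [Finset.card_erase_of_mem hu'τ, (mem_tops.1 hτ').2]; omega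
  refine ⟨τ', hτ', u', hu'τ, her, fun hu => ?_⟩
  -- if `u' = ord τ k` then `τ' = τ` lies on the wrong side of the common face
  have hττ : τ' = τ := by
    rw [← Finset.insert_erase hu'τ, her, hu, hρ, Finset.insert_erase (h.mem hτ k)]
  obtain ⟨ε, hε, hε0⟩ := (hfreq.and_eventually self_mem_nhdsWithin).exists
  have hx0 : coord ord τ k x = 0 := by
    refine eq_zero_of_mem_convexHull _ (fun s hs => ?_) hxρ
    exact h.coord_eq_zero hτ (hρτ s hs) (Finset.ne_of_mem_erase hs)
  have hy0 : coord ord τ k (y ε) = - ε * (colMat ord id τ).det := by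
    simp only [y, map_add, map_smul, map_sub, hx0, coord_self, smul_eq_mul]
    ring
  have hyn : 0 ≤ coord ord τ k (y ε) := by
    have : convexHull ℝ (τ' : Set (Fin n → ℝ)) ⊆ {z | 0 ≤ coord ord τ k z} := by
      refine convexHull_min (fun s hs => ?_)
        (convex_halfSpace_ge (coord ord τ k).isLinear 0)
      rw [hττ] at hs
      by_cases hsk : s = ord τ k
      · subst hsk
        change 0 ≤ coord ord τ k (ord τ k)
        rw [coord_self]; exact hd.le
      · exact (h.coord_eq_zero hτ hs hsk).ge
    exact this hε
  rw [hy0] at hyn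
  have : 0 < ε * (colMat ord id τ).det := mul_pos hε0 hd
  linarith

/-- `Neighbours T (τ, u) (τ', u')`: the top-dimensional simplices `τ` and `τ'` are adjacent along
the common face obtained by removing the vertex `u` from `τ`, resp. `u'` from `τ'`. -/
def Neighbours (T : Triangulation n) (p q : Finset (Fin n → ℝ) × (Fin n → ℝ)) : Prop :=
  p.1 ∈ tops T ∧ q.1 ∈ tops T ∧ p.2 ∈ p.1 ∧ q.2 ∈ q.1 ∧ q.1.erase q.2 = p.1.erase p.2 ∧ q.2 ≠ p.2

lemma Neighbours.symm {p q : Finset (Fin n → ℝ) × (Fin n → ℝ)} (hpq : Neighbours T p q) :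
    Neighbours T q p :=
  ⟨hpq.2.1, hpq.1, hpq.2.2.2.1, hpq.2.2.1, hpq.2.2.2.2.1.symm, hpq.2.2.2.2.2.symm⟩

/-- The orderings of two adjacent simplices differ by a permutation, once the two vertices off the
common face are identified; its sign relates the determinants of all labellings at once. -/
lemma exists_sign (h : Oriented T ord) {p q : Finset (Fin n → ℝ) × (Fin n → ℝ)}
    (hpq : Neighbours T p q) :
    ∃ s : ℝ, (s = 1 ∨ s = -1) ∧ ∀ μ μ' : (Fin n → ℝ) → (Fin n → ℝ),
      (∀ r ∈ p.1.erase p.2, μ' r = μ r) → μ' q.2 = μ p.2 →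
        (colMat ord μ' q.1).det = s * (colMat ord μ p.1).det := by
  obtain ⟨τ, u⟩ := p
  obtain ⟨τ', u'⟩ := q
  obtain ⟨hτ, hτ', hu, hu', he, hne⟩ := hpq
  simp only at hτ hτ' hu hu' he hne
  have hex : ∀ k, ∃ l, (ord τ' k = u' ∧ ord τ l = u) ∨
      (ord τ' k ∈ τ.erase u ∧ ord τ l = ord τ' k) := by
    intro k
    by_cases hk : ord τ' k = u'
    · obtain ⟨l, hl⟩ := h.exists_eq hτ hu
      exact ⟨l, Or.inl ⟨hk, hl⟩⟩
    · have hm : ord τ' k ∈ τ.erase u := by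
        rw [← he]; exact Finset.mem_erase.2 ⟨hk, h.mem hτ' k⟩
      obtain ⟨l, hl⟩ := h.exists_eq hτ (Finset.mem_of_mem_erase hm)
      exact ⟨l, Or.inr ⟨hm, hl⟩⟩
  choose f hf using hex
  have hfinj : Function.Injective f := by
    intro a b hab
    apply h.inj hτ'
    rcases hf a with ⟨ha, ha'⟩ | ⟨ha, ha'⟩ <;> rcases hf b with ⟨hb, hb'⟩ | ⟨hb, hb'⟩
    · rw [ha, hb]
    · rw [← hab, ha'] at hb'
      exact absurd hb'.symm (Finset.ne_of_mem_erase hb)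
    · rw [hab, hb'] at ha'
      exact absurd ha'.symm (Finset.ne_of_mem_erase ha)
    · rw [← ha', ← hb', hab]
  let σ : Equiv.Perm (Fin n) := Equiv.ofBijective f (Finite.injective_iff_bijective.1 hfinj)
  refine ⟨((Equiv.Perm.sign σ : ℤ) : ℝ), ?_, fun μ μ' h1 h2 => ?_⟩
  · rcases Int.units_eq_one_or (Equiv.Perm.sign σ) with hs | hs <;> simp [hs]
  · rw [← Matrix.det_permute']
    congr 1
    ext i k
    simp only [colMat, Matrix.of_apply, Matrix.submatrix_apply, id]
    change μ' (ord τ' k) i = μ (ord τ (f k)) i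
    rcases hf k with ⟨hk, hk'⟩ | ⟨hk, hk'⟩
    · rw [hk, hk']; exact congrFun h2 i
    · rw [hk', h1 _ hk]

/-- Adjacent simplices induce opposite orientations on their common face. -/
lemma det_opposite (h : Oriented T ord) {p q : Finset (Fin n → ℝ) × (Fin n → ℝ)}
    (hpq : Neighbours T p q) {μ μ' : (Fin n → ℝ) → (Fin n → ℝ)}
    (h1 : ∀ r ∈ p.1.erase p.2, μ' r = μ r) (h2 : μ' q.2 = μ p.2) :
    (colMat ord μ' q.1).det = - (colMat ord μ p.1).det := by
  obtain ⟨s, hs, hμ⟩ := exists_sign h hpq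
  obtain ⟨k, hk⟩ := h.exists_eq hpq.1 hpq.2.2.1
  have e := hμ (Function.update id p.2 q.2) id
    (fun r hr => by simp [Function.update_of_ne (Finset.ne_of_mem_erase hr)]) (by simp)
  have hn := coord_not_pos h hpq.1 hpq.2.1 (k := k) hpq.2.2.2.1
    (by rw [hk]; exact hpq.2.2.2.2.1) (by rw [hk]; exact hpq.2.2.2.2.2)
  rw [coord_eq_det h hpq.1, hk] at hn
  have hq := h.det_pos hpq.2.1
  rcases hs with rfl | rfl
  · rw [e, one_mul] at hq
    exact absurd hq hn
  · rw [hμ μ μ' h1 h2]; ring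

lemma opposite_unique (h : Oriented T ord) {p q r : Finset (Fin n → ℝ) × (Fin n → ℝ)}
    (hpq : Neighbours T p q) (hqr : Neighbours T q r) : r = p := by
  have hpr : r.1.erase r.2 = p.1.erase p.2 := hqr.2.2.2.2.1.trans hpq.2.2.2.2.1
  by_cases hne : r.2 = p.2
  · refine Prod.ext ?_ hne
    rw [← Finset.insert_erase hqr.2.2.2.1, hpr, hne, Finset.insert_erase hpq.2.2.1]
  · exfalso
    have hpr' : Neighbours T p r := ⟨hpq.1, hqr.2.1, hpq.2.2.1, hqr.2.2.2.1, hpr, hne⟩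
    -- three simplices with a common face would pairwise induce opposite orientations on it
    have e1 := det_opposite h hpq (μ := Function.update id p.2 r.2)
      (μ' := Function.update id q.2 r.2) (fun s hs => by
        rw [Function.update_of_ne (Finset.ne_of_mem_erase hs)]
        rw [← hpq.2.2.2.2.1] at hs
        rw [Function.update_of_ne (Finset.ne_of_mem_erase hs)]) (by simp)
    have e2 := det_opposite h hpr' (μ := Function.update id p.2 r.2) (μ' := id)
      (fun s hs => by simp [Function.update_of_ne (Finset.ne_of_mem_erase hs)]) (by simp)
    have e3 := det_opposite h hqr (μ := Function.update id q.2 r.2) (μ' := id)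
      (fun s hs => by simp [Function.update_of_ne (Finset.ne_of_mem_erase hs)]) (by simp)
    have := h.det_pos hqr.2.1
    linarith

/-! ### Independence of the labelling -/

/-- The sum of the determinants of the labels over all top-dimensional simplices. -/
def detSum (T : Triangulation n) (ord : Finset (Fin n → ℝ) → Fin n → (Fin n → ℝ))
    (μ : (Fin n → ℝ) → (Fin n → ℝ)) : ℝ :=
  ∑ τ ∈ tops T, (colMat ord μ τ).det

/-- If column `k` has coordinate sum `0` and all other columns have coordinate sum `1`, the
determinant is the sum of those obtained by replacing one of the other columns by a fixed vector
`a` of coordinate sum `1`: apply the coordinate sum to Cramer's rule `A (cramer A a) = det A • a`. -/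
lemma det_eq_sum_updateCol (A : Matrix (Fin n) (Fin n) ℝ) (k : Fin n) (a : Fin n → ℝ)
    (ha : ∑ i, a i = 1) (hk : ∑ i, A i k = 0) (hl : ∀ l, l ≠ k → ∑ i, A i l = 1) :
    A.det = ∑ l ∈ Finset.univ.erase k, (A.updateCol l a).det := by
  have h1 := congrArg (fun x : Fin n → ℝ => ∑ i, x i) (Matrix.mulVec_cramer A a)
  simp only [Matrix.mulVec, dotProduct, Pi.smul_apply, smul_eq_mul, ← Finset.mul_sum, ha,
    mul_one] at h1
  rw [← h1, Finset.sum_comm]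
  simp_rw [← Finset.sum_mul]
  rw [← Finset.add_sum_erase _ _ (Finset.mem_univ k), hk, zero_mul, zero_add]
  refine Finset.sum_congr rfl fun l hl' => ?_
  rw [hl l (Finset.ne_of_mem_erase hl'), one_mul, Matrix.cramer_apply]

lemma colMat_update (h : Oriented T ord) {τ : Finset (Fin n → ℝ)} (hτ : τ ∈ tops T)
    (μ : (Fin n → ℝ) → (Fin n → ℝ)) (k : Fin n) (a : Fin n → ℝ) :
    colMat ord (Function.update μ (ord τ k) a) τ = (colMat ord μ τ).updateCol k a := by
  ext i l
  by_cases hl : l = k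
  · subst hl; simp [colMat]
  · simp [colMat, hl, (h.inj hτ).ne hl]

/-- The total variation caused by moving the label of `v` by `w` is a sum over the
codimension-one faces through `v`, in which the two sides of each face cancel. -/
lemma sum_faces_eq_zero (h : Oriented T ord) {μ : (Fin n → ℝ) → (Fin n → ℝ)}
    {v a : Fin n → ℝ} (hzero : ∀ r ∈ T.complex.vertices, ∀ i, v i = 0 → r i = 0 → μ r i = 0)
    (ha : ∀ i, v i = 0 → a i = 0) :
    ∑ τ ∈ (tops T).filter (v ∈ ·), ∑ u ∈ τ.erase v, (colMat ord (Function.update μ u a) τ).det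
      = 0 := by
  rw [Finset.sum_sigma']
  set s : Finset ((_ : Finset (Fin n → ℝ)) × (Fin n → ℝ)) :=
    ((tops T).filter (v ∈ ·)).sigma fun τ => τ.erase v with hs
  have hmem : ∀ x : (_ : Finset (Fin n → ℝ)) × (Fin n → ℝ), x ∈ s ↔
      x.1 ∈ tops T ∧ v ∈ x.1 ∧ x.2 ∈ x.1 ∧ x.2 ≠ v := by
    intro x
    simp only [hs, Finset.mem_sigma, Finset.mem_filter, Finset.mem_erase]
    tauto
  let g : (_ : Finset (Fin n → ℝ)) × (Fin n → ℝ) → (_ : Finset (Fin n → ℝ)) × (Fin n → ℝ) :=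
    fun x => if hx : ∃ q, Neighbours T (x.1, x.2) q then ⟨hx.choose.1, hx.choose.2⟩ else x
  have hg : ∀ x, (∃ q, Neighbours T (x.1, x.2) q) →
      Neighbours T (x.1, x.2) ((g x).1, (g x).2) := by
    intro x hx
    have := hx.choose_spec
    simp only [g, hx, dif_pos]
    exact this
  have hg' : ∀ x, (¬ ∃ q, Neighbours T (x.1, x.2) q) → g x = x := by
    intro x hx
    simp only [g]
    rw [dif_neg hx]
  -- faces on the boundary contribute zero
  have hbd : ∀ x ∈ s, (¬ ∃ q, Neighbours T (x.1, x.2) q) →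
      (colMat ord (Function.update μ x.2 a) x.1).det = 0 := by
    rintro ⟨τ, u⟩ hx hno
    obtain ⟨hτ, hv, hu, huv⟩ := (hmem _).1 hx
    simp only at hτ hv hu huv hno ⊢
    obtain ⟨k, rfl⟩ := h.exists_eq hτ hu
    have hvρ : v ∈ τ.erase (ord τ k) := Finset.mem_erase.2 ⟨huv.symm, hv⟩
    have : ∃ i, ∀ r ∈ τ.erase (ord τ k), r i = 0 := by
      by_contra hcon
      push Not at hcon
      obtain ⟨τ', hτ', u', hu', he, hne⟩ := exists_opposite h hτ ⟨v, hvρ⟩ hcon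
      exact hno ⟨(τ', u'), hτ, hτ', h.mem hτ k, hu', he, hne⟩
    obtain ⟨i, hi⟩ := this
    apply Matrix.det_eq_zero_of_row_eq_zero i
    intro l
    rw [colMat_update h hτ]
    by_cases hl : l = k
    · subst hl
      simpa using ha i (hi v hvρ)
    · rw [Matrix.updateCol_ne hl]
      exact hzero _ (mem_vertices_of_mem (mem_tops.1 hτ).1 (h.mem hτ l)) i (hi v hvρ)
        (hi _ (Finset.mem_erase.2 ⟨(h.inj hτ).ne hl, h.mem hτ l⟩))
  refine Finset.sum_involution (fun x _ => g x) ?_ ?_ ?_ ?_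
  · intro x hx
    by_cases hq : ∃ q, Neighbours T (x.1, x.2) q
    · have hn := hg x hq
      have := det_opposite h hn (μ := Function.update μ x.2 a)
        (μ' := Function.update μ (g x).2 a) (fun r hr => by
          rw [Function.update_of_ne (Finset.ne_of_mem_erase hr)]
          rw [← hn.2.2.2.2.1] at hr
          rw [Function.update_of_ne (Finset.ne_of_mem_erase hr)]) (by simp)
      simp only at this
      rw [this, add_neg_cancel]
    · rw [hg' x hq, hbd x hx hq, add_zero]
  · intro x hx hne
    have hq : ∃ q, Neighbours T (x.1, x.2) q := by
      by_contra hq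
      exact hne (hbd x hx hq)
    have hn := hg x hq
    intro e
    exact hn.2.2.2.2.2 (by rw [e])
  · intro x hx
    by_cases hq : ∃ q, Neighbours T (x.1, x.2) q
    · obtain ⟨hτ, hv, hu, huv⟩ := (hmem _).1 hx
      obtain ⟨-, h1, -, h2, h3, -⟩ := hg x hq
      have hvρ : v ∈ (g x).1.erase (g x).2 := by
        simp only at h3
        rw [h3]; exact Finset.mem_erase.2 ⟨huv.symm, hv⟩
      exact (hmem _).2 ⟨h1, Finset.mem_of_mem_erase hvρ, h2, (Finset.ne_of_mem_erase hvρ).symm⟩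
    · rw [hg' x hq]; exact hx
  · intro x hx
    by_cases hq : ∃ q, Neighbours T (x.1, x.2) q
    · have h1 := hg x hq
      have h2 := hg (g x) ⟨_, h1.symm⟩
      have := opposite_unique h h1 h2
      simp only [Prod.mk.injEq] at this
      exact Sigma.ext this.1 (heq_of_eq this.2)
    · rw [hg' x hq, hg' x hq]

/-- Moving the label of a single vertex inside the affine hull of its supporting face does not
change the sum of determinants. -/
lemma detSum_update (h : Oriented T ord) {μ : (Fin n → ℝ) → (Fin n → ℝ)} (hμ : Admissible T μ)
    {v p : Fin n → ℝ} (hv : v ∈ T.complex.vertices)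
    (hp : ∑ i, p i = 1 ∧ ∀ i, v i = 0 → p i = 0) :
    detSum T ord (Function.update μ v p) = detSum T ord μ := by
  have hvstd : v ∈ stdSimplex ℝ (Fin n) := T.space_eq ▸ T.complex.vertices_subset_space hv
  obtain ⟨j, hj⟩ : ∃ j, v j ≠ 0 := by
    by_contra hcon
    push Not at hcon
    have := hvstd.2
    simp [hcon] at this
  set a : Fin n → ℝ := Pi.single j 1 with ha
  have ha1 : ∑ i, a i = 1 := by simp [ha]
  have ha0 : ∀ i, v i = 0 → a i = 0 := fun i hi => by
    rw [ha, Pi.single_eq_of_ne]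
    rintro rfl; exact hj hi
  set w := p - μ v with hw
  have hw1 : ∑ i, w i = 0 := by simp [hw, hp.1, (hμ v hv).1]
  have hw0 : ∀ i, v i = 0 → w i = 0 := fun i hi => by simp [hw, hp.2 i hi, (hμ v hv).2 i hi]
  have key := sum_faces_eq_zero h (μ := Function.update μ v w) (v := v) (a := a)
    (fun r hr i hvi hri => by
      by_cases hrv : r = v
      · subst hrv; simpa using hw0 i hvi
      · rw [Function.update_of_ne hrv]; exact (hμ r hr).2 i hri) ha0
  rw [← sub_eq_zero, detSum, detSum, ← Finset.sum_sub_distrib, ← key, Finset.sum_filter]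
  refine Finset.sum_congr rfl fun τ hτ => ?_
  have hvert : ∀ l, ord τ l ∈ T.complex.vertices := fun l =>
    mem_vertices_of_mem (mem_tops.1 hτ).1 (h.mem hτ l)
  split_ifs with hvτ
  · obtain ⟨k, rfl⟩ := h.exists_eq hτ hvτ
    have e1 : (colMat ord (Function.update μ (ord τ k) p) τ).det - (colMat ord μ τ).det =
        (colMat ord (Function.update μ (ord τ k) w) τ).det := by
      have hp' : p = μ (ord τ k) + w := by rw [hw]; abel
      rw [hp', colMat_update h hτ, colMat_update h hτ, Matrix.det_updateCol_add,
        ← colMat_update h hτ, Function.update_eq_self]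
      ring
    rw [e1, det_eq_sum_updateCol _ k a ha1]
    · have : τ.erase (ord τ k) = (Finset.univ.erase k).image (ord τ) := by
        rw [Finset.image_erase (h.inj hτ), h.image_eq hτ]
      rw [this, Finset.sum_image ((h.inj hτ).injOn)]
      exact Finset.sum_congr rfl fun l _ =>
        (congrArg Matrix.det (colMat_update h hτ _ l a)).symm
    · simpa [colMat] using hw1
    · intro l hl
      simp only [colMat, Matrix.of_apply]
      rw [Function.update_of_ne ((h.inj hτ).ne hl)]
      exact (hμ _ (hvert l)).1
  · rw [sub_eq_zero]
    congr 1
    ext i l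
    simp only [colMat, Matrix.of_apply]
    rw [Function.update_of_ne]
    rintro e
    exact hvτ (e ▸ h.mem hτ l)

lemma admissible_id : Admissible T id := fun v hv =>
  ⟨(T.space_eq ▸ T.complex.vertices_subset_space hv : v ∈ stdSimplex ℝ (Fin n)).2,
    fun _ hi => hi⟩

lemma vertices_finite : T.complex.vertices.Finite := by
  rw [Geometry.SimplicialComplex.vertices_eq]
  exact T.finite.biUnion fun s _ => s.finite_toSet

/-- The sum of determinants is the same for every admissible labelling. -/
lemma detSum_eq_detSum_id (h : Oriented T ord) {μ : (Fin n → ℝ) → (Fin n → ℝ)}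
    (hμ : Admissible T μ) : detSum T ord μ = detSum T ord id := by
  have key : ∀ A : Finset (Fin n → ℝ), (A : Set (Fin n → ℝ)) ⊆ T.complex.vertices →
      detSum T ord (fun x => if x ∈ A then μ x else x) = detSum T ord id := by
    intro A
    induction A using Finset.induction_on with
    | empty => intro _; simp [Function.id_def]
    | insert v A hvA ih =>
      intro hA
      rw [Finset.coe_insert, Set.insert_subset_iff] at hA
      rw [← ih hA.2, ← detSum_update h (μ := fun x => if x ∈ A then μ x else x) _ hA.1
        (hμ v hA.1)]
      · congr 1
        ext1 x
        by_cases hx : x = v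
        · subst hx; simp
        · simp [hx]
      · intro r hr
        by_cases hrA : r ∈ A
        · simpa [hrA] using hμ r hr
        · simpa [hrA] using admissible_id r hr
  rw [← key (vertices_finite (T := T)).toFinset (by simp)]
  unfold detSum
  refine Finset.sum_congr rfl fun τ hτ => ?_
  congr 1
  ext i k
  have : ord τ k ∈ T.complex.vertices := mem_vertices_of_mem (mem_tops.1 hτ).1 (h.mem hτ k)
  simp [colMat, this]

/-! ### The identity labelling -/

/-- The convex hull of the origin and the standard basis vectors. -/
def corner (n : ℕ) : Set (Fin n → ℝ) := {x | (∀ i, 0 ≤ x i) ∧ ∑ i, x i ≤ 1}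

lemma isCompact_corner (n : ℕ) : IsCompact (corner n) := by
  have hcl : IsClosed (corner n) := by
    have : corner n = (⋂ i, {x : Fin n → ℝ | 0 ≤ x i}) ∩ {x | ∑ i, x i ≤ 1} := by
      ext x; simp [corner]
    rw [this]
    exact (isClosed_iInter fun i => isClosed_le continuous_const (continuous_apply i)).inter
      (isClosed_le (by fun_prop) continuous_const)
  refine (isCompact_Icc (a := (0 : Fin n → ℝ)) (b := 1)).of_isClosed_subset hcl ?_
  intro x hx
  refine ⟨hx.1, fun i => ?_⟩
  exact (Finset.single_le_sum (fun j _ => hx.1 j) (Finset.mem_univ i)).trans hx.2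

lemma volume_corner_pos (n : ℕ) : 0 < volume (corner n) := by
  set U : Set (Fin n → ℝ) := (⋂ i, {x : Fin n → ℝ | 0 < x i}) ∩ {x | ∑ i, x i < 1} with hU
  have hopen : IsOpen U :=
    (isOpen_iInter_of_finite fun i => isOpen_lt continuous_const (continuous_apply i)).inter
      (isOpen_lt (by fun_prop) continuous_const)
  have hne : U.Nonempty := by
    refine ⟨fun _ => ((n : ℝ) + 1)⁻¹, ?_, ?_⟩
    · simp only [Set.mem_iInter, Set.mem_ofPred_eq]
      intro i; positivity
    · simp only [Set.mem_ofPred_eq, Finset.sum_const, Finset.card_univ, Fintype.card_fin,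
        nsmul_eq_mul]
      rw [← div_eq_mul_inv, div_lt_one (by positivity)]
      linarith
  refine (hopen.measure_pos volume hne).trans_le (measure_mono ?_)
  rintro x ⟨h1, h2⟩
  rw [Set.mem_iInter] at h1
  exact ⟨fun i => (h1 i).le, h2.le⟩

lemma convexHull_eq_image (h : Oriented T ord) {τ : Finset (Fin n → ℝ)} (hτ : τ ∈ tops T) :
    convexHull ℝ (τ : Set (Fin n → ℝ)) =
      Matrix.toLin' (colMat ord id τ) '' stdSimplex ℝ (Fin n) := by
  rw [← convexHull_rangle_single_eq_stdSimplex, LinearMap.image_convexHull, ← Set.range_comp]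
  congr 1
  conv_lhs => rw [← h.image_eq hτ]
  rw [Finset.coe_image, Finset.coe_univ, Set.image_univ]
  congr 1
  ext k i
  simp [colMat, Matrix.mulVec_single]

/-- A nonzero point of `corner n` can be rescaled into the standard simplex. -/
lemma smul_mem_stdSimplex {x : Fin n → ℝ} (hx : x ∈ corner n) (hx0 : x ≠ 0) :
    0 < ∑ i, x i ∧ (∑ i, x i)⁻¹ • x ∈ stdSimplex ℝ (Fin n) := by
  have hpos : 0 < ∑ i, x i := by
    refine lt_of_le_of_ne (Finset.sum_nonneg fun i _ => hx.1 i) fun e => hx0 ?_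
    have := (Finset.sum_eq_zero_iff_of_nonneg (fun i _ => hx.1 i)).1 e.symm
    ext i; exact this i (Finset.mem_univ i)
  refine ⟨hpos, fun i => mul_nonneg (inv_nonneg.2 hpos.le) (hx.1 i), ?_⟩
  simp only [Pi.smul_apply, smul_eq_mul, ← Finset.mul_sum]
  exact inv_mul_cancel₀ hpos.ne'

lemma sum_toLin'_apply (h : Oriented T ord) {τ : Finset (Fin n → ℝ)} (hτ : τ ∈ tops T)
    (x : Fin n → ℝ) : ∑ i, Matrix.toLin' (colMat ord id τ) x i = ∑ i, x i := by
  simp only [Matrix.toLin'_apply, Matrix.mulVec, dotProduct]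
  rw [Finset.sum_comm]
  refine Finset.sum_congr rfl fun k _ => ?_
  rw [← Finset.sum_mul]
  have := (face_subset_stdSimplex (mem_tops.1 hτ).1 (h.mem hτ k)).2
  simp [colMat, this]

lemma mem_convexHull_of_mem_cone (h : Oriented T ord) {τ : Finset (Fin n → ℝ)} (hτ : τ ∈ tops T)
    {x : Fin n → ℝ} (hx : x ∈ Matrix.toLin' (colMat ord id τ) '' corner n) (hx0 : x ≠ 0) :
    (∑ i, x i)⁻¹ • x ∈ convexHull ℝ (τ : Set (Fin n → ℝ)) := by
  obtain ⟨c, hc, rfl⟩ := hx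
  have hc0 : c ≠ 0 := by rintro rfl; simp at hx0
  rw [convexHull_eq_image h hτ, sum_toLin'_apply h hτ, ← map_smul]
  exact Set.mem_image_of_mem _ (smul_mem_stdSimplex hc hc0).2

lemma corner_eq_iUnion (h : Oriented T ord) (hne : (tops T).Nonempty) :
    corner n = ⋃ τ ∈ tops T, Matrix.toLin' (colMat ord id τ) '' corner n := by
  apply Set.Subset.antisymm
  · intro x hx
    simp only [Set.mem_iUnion]
    by_cases hx0 : x = 0
    · obtain ⟨τ, hτ⟩ := hne
      exact ⟨τ, hτ, 0, ⟨by simp, by simp⟩, by simp [hx0]⟩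
    · obtain ⟨hpos, hm⟩ := smul_mem_stdSimplex hx hx0
      rw [← T.space_eq, Geometry.SimplicialComplex.mem_space_iff] at hm
      obtain ⟨σ, hσ, hm⟩ := hm
      obtain ⟨τ, hτ, hsub, hcard⟩ := T.pure σ hσ
      have hτ' : τ ∈ tops T := mem_tops.2 ⟨hτ, hcard⟩
      replace hm := convexHull_mono (𝕜 := ℝ) (show (σ : Set (Fin n → ℝ)) ⊆ τ by
        exact_mod_cast hsub) hm
      rw [convexHull_eq_image h hτ'] at hm
      obtain ⟨c, hc, hcx⟩ := hm
      refine ⟨τ, hτ', (∑ i, x i) • c, ⟨fun i => mul_nonneg hpos.le (hc.1 i), ?_⟩, ?_⟩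
      · simp only [Pi.smul_apply, smul_eq_mul, ← Finset.mul_sum, hc.2, mul_one]
        exact hx.2
      · rw [map_smul, hcx, smul_inv_smul₀ hpos.ne']
  · simp only [Set.iUnion_subset_iff]
    rintro τ hτ _ ⟨c, hc, rfl⟩
    refine ⟨fun i => ?_, by rw [sum_toLin'_apply h hτ]; exact hc.2⟩
    simp only [Matrix.toLin'_apply, Matrix.mulVec, dotProduct]
    exact Finset.sum_nonneg fun k _ => mul_nonneg
      ((face_subset_stdSimplex (mem_tops.1 hτ).1 (h.mem hτ k)).1 i) (hc.1 k)

/-- The cones over two different simplices overlap in a linear hyperplane. -/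
lemma aedisjoint_cones (h : Oriented T ord) {τ τ' : Finset (Fin n → ℝ)} (hτ : τ ∈ tops T)
    (hτ' : τ' ∈ tops T) (hne : τ ≠ τ') :
    AEDisjoint volume (Matrix.toLin' (colMat ord id τ) '' corner n)
      (Matrix.toLin' (colMat ord id τ') '' corner n) := by
  obtain ⟨r, hr, hr'⟩ : ∃ r ∈ τ, r ∉ τ' := by
    by_contra hcon
    push Not at hcon
    exact hne (Finset.eq_of_subset_of_card_le hcon
      (by rw [(mem_tops.1 hτ).2, (mem_tops.1 hτ').2]))
  obtain ⟨k, rfl⟩ := h.exists_eq hτ hr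
  refine measure_mono_null (t := (LinearMap.ker (coord ord τ k) : Set (Fin n → ℝ))) ?_
    (Measure.addHaar_submodule _ _ fun htop => ?_)
  · rintro x ⟨h1, h2⟩
    by_cases hx0 : x = 0
    · simp [hx0]
    have hm := T.complex.inter_subset_convexHull (mem_tops.1 hτ).1 (mem_tops.1 hτ').1
      ⟨mem_convexHull_of_mem_cone h hτ h1 hx0, mem_convexHull_of_mem_cone h hτ' h2 hx0⟩
    have hz := eq_zero_of_mem_convexHull (coord ord τ k) (fun s hs =>
      h.coord_eq_zero hτ hs.1 (fun e => hr' (e ▸ hs.2))) hm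
    rw [map_smul, smul_eq_mul, mul_eq_zero] at hz
    rcases hz with hz | hz
    · have hxc : x ∈ corner n := by
        rw [corner_eq_iUnion h ⟨τ, hτ⟩]
        exact Set.mem_biUnion hτ h1
      exact absurd hz (inv_ne_zero (smul_mem_stdSimplex hxc hx0).1.ne')
    · exact hz
  · have : ord τ k ∈ LinearMap.ker (coord ord τ k) := htop ▸ Submodule.mem_top
    rw [LinearMap.mem_ker, coord_self] at this
    linarith [h.det_pos hτ]

/-- For the identity labelling the sum of determinants compares the volumes of `corner n` and of
the cones from the origin over the simplices, which tile it. -/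
lemma detSum_id (h : Oriented T ord) (hn : 1 ≤ n) : detSum T ord id = 1 := by
  have hne : (tops T).Nonempty := by
    have : (Pi.single ⟨0, hn⟩ 1 : Fin n → ℝ) ∈ T.complex.space := by
      rw [T.space_eq]; exact single_mem_stdSimplex ℝ _
    rw [Geometry.SimplicialComplex.mem_space_iff] at this
    obtain ⟨σ, hσ, -⟩ := this
    obtain ⟨τ, hτ, -, hc⟩ := T.pure σ hσ
    exact ⟨τ, mem_tops.2 ⟨hτ, hc⟩⟩
  have hvol : volume (corner n) =
      ∑ τ ∈ tops T, ENNReal.ofReal (colMat ord id τ).det * volume (corner n) := by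
    conv_lhs => rw [corner_eq_iUnion h hne]
    rw [measure_biUnion_finset₀]
    · refine Finset.sum_congr rfl fun τ hτ => ?_
      rw [Measure.addHaar_image_linearMap, LinearMap.det_toLin', abs_of_pos (h.det_pos hτ)]
    · intro τ hτ τ' hτ' hne
      exact aedisjoint_cones h hτ hτ' hne
    · intro τ _
      refine (IsCompact.measurableSet ?_).nullMeasurableSet
      exact (isCompact_corner n).image (LinearMap.continuous_on_pi _)
  rw [← Finset.sum_mul, ← ENNReal.ofReal_sum_of_nonneg fun τ hτ => (h.det_pos hτ).le] at hvol
  have h1 : ENNReal.ofReal (detSum T ord id) = 1 := by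
    have h0 := (volume_corner_pos n).ne'
    have ht := (isCompact_corner n).measure_lt_top (μ := volume) |>.ne
    exact (ENNReal.mul_left_inj h0 ht).1 (by rw [one_mul]; exact hvol.symm)
  exact ENNReal.ofReal_eq_one.1 h1

/-- A point of the affine hull of the supporting face of `v` has zero coordinates wherever `v`
does. -/
lemma apply_eq_zero_of_mem_affineSpan {v p : Fin n → ℝ}
    (hp : p ∈ affineSpan ℝ {p : Fin n → ℝ | ∃ i, v i ≠ 0 ∧ p = Pi.single i 1}) {i : Fin n}
    (hi : v i = 0) : p i = 0 := by
  have hle : affineSpan ℝ {p : Fin n → ℝ | ∃ i, v i ≠ 0 ∧ p = Pi.single i 1} ≤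
      (LinearMap.ker (LinearMap.proj i : (Fin n → ℝ) →ₗ[ℝ] ℝ)).toAffineSubspace := by
    rw [affineSpan_le]
    rintro _ ⟨j, hj, rfl⟩
    have : i ≠ j := by rintro rfl; exact hj hi
    simp [this]
  simpa using hle hp

end

/-- If `T` is a triangulation of the standard simplex, coherently oriented in the sense
that each (n-1)-dimensional simplex `σ` is given an ordering `ord σ 1, …, ord σ n` of its
vertices whose determinant is positive, and `lam` sends each vertex `v` of `T` to a point
of the standard simplex lying in the affine hull of the supporting face of `v` (the affine
span of the unit vectors `e_i` for the indices `i` with `v i ≠ 0`), then the sum over all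
(n-1)-dimensional simplices of the determinants of the images of their vertices has
absolute value 1. -/
theorem det_sum_eq_one {n : ℕ} (hn : 1 ≤ n) (T : Triangulation n)
    (ord : Finset (Fin n → ℝ) → Fin n → (Fin n → ℝ))
    (hord : ∀ σ ∈ T.complex.faces, σ.card = n →
      (∀ k, ord σ k ∈ σ) ∧ Function.Injective (ord σ) ∧
        0 < Matrix.det (Matrix.of fun i k => ord σ k i))
    (lam : (Fin n → ℝ) → (Fin n → ℝ))
    (hlam1 : ∀ v ∈ T.complex.vertices, lam v ∈ stdSimplex ℝ (Fin n))
    (hlam2 : ∀ v ∈ T.complex.vertices,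
      lam v ∈ affineSpan ℝ {p : Fin n → ℝ | ∃ i, v i ≠ 0 ∧ p = Pi.single i 1}) :
    |∑ᶠ σ ∈ {σ ∈ T.complex.faces | σ.card = n},
        Matrix.det (Matrix.of fun i k => lam (ord σ k) i)| = 1 := by
  have h : Oriented T ord := hord
  have hadm : Admissible T lam := fun v hv =>
    ⟨(hlam1 v hv).2, fun i hi => apply_eq_zero_of_mem_affineSpan (hlam2 v hv) hi⟩
  have hsum : (∑ᶠ σ ∈ {σ ∈ T.complex.faces | σ.card = n},
      Matrix.det (Matrix.of fun i k => lam (ord σ k) i)) = detSum T ord lam := by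
    have : {σ ∈ T.complex.faces | σ.card = n} = (tops T : Set (Finset (Fin n → ℝ))) := by
      ext σ; simp [mem_tops]
    rw [this, finsum_mem_coe_finset]
    rfl
  rw [hsum, detSum_eq_detSum_id h hadm, detSum_id h hn, abs_one]
end
end

section
/- For every n ≥ 1 and every ε > 0, there exist a nice triangulation T of Δ^{n−1} all of whose simplices have diameter less than ε, such that the supporting faces of any two adjacent vertices of T are comparable by inclusion, together with a labeling o : V(T) → [n] satisfying o(r^j(v)) = o(v) for every j ∈ [n] and every vertex v of T contained in the 1̂-facet, and such that any two adjacent vertices of T receive distinct labels via o. -/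
/-!
The triangulation is an iterated barycentric subdivision of the standard simplex. Faces of the
barycentric subdivision `sd K` are the sets of barycenters of chains of faces of `K`, so every
vertex `v` of `sd K` is the barycenter of a unique face of `K`, and its label is the dimension of
that face. Adjacent vertices come from two distinct nested faces `σ ⊂ τ`: their labels differ, and
the support of the barycenter of `σ` is contained in that of `τ`. Subdivision preserves linear
symmetries, so starting from the simplex itself every `rmap j` acts on the whole complex, not only
on one facet, and it preserves the dimension of faces, hence labels. The mesh shrinks by the factor
`1 - 1/n` at each step (`dist_bary_le`).

The bulk of the proof is that `sd K` is a geometric simplicial complex with the same space as `K`.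
In barycentric coordinates, a nonnegative combination of barycenters of a chain of faces is a
nonnegative combination of indicator functions of the members of the chain, that is, a layer
decomposition of the coordinate function. Existence of such decompositions (`exists_layers`) gives
equality of the spaces. Their uniqueness (`layers_unique`, `bary_unique`) gives injectivity of the
barycenter map, affine independence of the new simplices and the intersection property.
-/

open scoped Classical
noncomputable section

/-! ### Chains of finite sets and layer decompositions -/

set_option linter.unusedSectionVars false

section Chains

variable {E : Type*} [DecidableEq E]

/-- A finite family of sets that is totally ordered by inclusion and nonempty has a largest
member. -/
lemma exists_top {C : Finset (Finset E)} (hC : IsChain (· ⊆ ·) (C : Set (Finset E)))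
    (hne : C.Nonempty) : ∃ s ∈ C, ∀ σ ∈ C, σ ⊆ s := by
  obtain ⟨s, hs, hmax⟩ := C.exists_max_image Finset.card hne
  refine ⟨s, hs, fun σ hσ => ?_⟩
  rcases hC.total hσ hs with h | h
  · exact h
  · exact (Finset.eq_of_subset_of_card_le h (hmax σ hσ)).ge

/-- The members of a chain that differ from `σ` and have at most as many elements as `σ` do
not cover `σ`. -/
lemma exists_mem_notMem {C : Finset (Finset E)} (hC : IsChain (· ⊆ ·) (C : Set (Finset E)))
    {σ : Finset E} (hσ : σ.Nonempty) :
    ∃ u ∈ σ, ∀ τ ∈ C, τ.card ≤ σ.card → τ ≠ σ → u ∉ τ := by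
  set D := C.filter fun τ => τ.card ≤ σ.card ∧ τ ≠ σ with hD
  rcases D.eq_empty_or_nonempty with h | h
  · obtain ⟨u, hu⟩ := hσ
    refine ⟨u, hu, fun τ hτ h1 h2 => ?_⟩
    have : τ ∈ D := by simp [hD, hτ, h1, h2]
    simp [h] at this
  · obtain ⟨s, hs, hsD⟩ := exists_top
      (hC.mono (Finset.coe_subset.2 (Finset.filter_subset _ _))) h
    rw [Finset.mem_filter] at hs
    have : ¬ σ ⊆ s := fun hsub =>
      hs.2.2 (Finset.eq_of_subset_of_card_le hsub hs.2.1).symm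
    obtain ⟨u, hu, hus⟩ := Finset.not_subset.1 this
    exact ⟨u, hu, fun τ hτ h1 h2 huτ =>
      hus (hsD τ (by simp [hτ, h1, h2]) huτ)⟩

/-- Comparison step for layer decompositions: at a largest set on which `a` and `a'` differ,
`a` cannot exceed `a'`, because some point of that set gets a smaller total from `a'`. -/
lemma layers_le {C D : Finset (Finset E)}
    (hD : IsChain (· ⊆ ·) (D : Set (Finset E)))
    {a a' : Finset E → ℝ} (ha : ∀ σ, 0 ≤ a σ) (ha' : ∀ σ, 0 ≤ a' σ)
    (haC : ∀ σ, σ ∉ C → a σ = 0) (haD : ∀ σ, σ ∉ D → a' σ = 0)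
    (h : ∀ v, ∑ σ ∈ C ∪ D, (if v ∈ σ then a σ else 0) = ∑ σ ∈ C ∪ D, if v ∈ σ then a' σ else 0)
    {σ : Finset E} (hσ : σ.Nonempty) (hbig : ∀ τ, σ.card < τ.card → a τ = a' τ) :
    a σ ≤ a' σ := by
  by_contra hlt
  push Not at hlt
  have hσC : σ ∈ C := by
    by_contra hn
    rw [haC σ hn] at hlt
    exact absurd (ha' σ) (not_le.2 hlt)
  obtain ⟨u, hu, huD⟩ := exists_mem_notMem hD hσ
  have hlt' : ∑ τ ∈ C ∪ D, (if u ∈ τ then a' τ else 0) <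
      ∑ τ ∈ C ∪ D, if u ∈ τ then a τ else 0 := by
    refine Finset.sum_lt_sum (fun τ _ => ?_) ⟨σ, Finset.mem_union_left _ hσC, by simpa [hu]⟩
    split_ifs with hτ
    · by_cases h1 : σ.card < τ.card
      · exact (hbig τ h1).ge
      by_cases h2 : τ = σ
      · exact h2 ▸ hlt.le
      · have : τ ∉ D := fun hτD => huD τ hτD (not_lt.1 h1) h2 hτ
        rw [haD τ this]; exact ha τ
    · exact le_rfl
  exact hlt'.ne (h u).symm

/-- A function has at most one decomposition as a nonnegative combination of indicators of a chain
of nonempty finite sets. -/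
lemma layers_unique {C D : Finset (Finset E)}
    (hC : IsChain (· ⊆ ·) (C : Set (Finset E))) (hD : IsChain (· ⊆ ·) (D : Set (Finset E)))
    (hCne : ∀ σ ∈ C, σ.Nonempty) (hDne : ∀ σ ∈ D, σ.Nonempty)
    {a a' : Finset E → ℝ} (ha : ∀ σ, 0 ≤ a σ) (ha' : ∀ σ, 0 ≤ a' σ)
    (haC : ∀ σ, σ ∉ C → a σ = 0) (haD : ∀ σ, σ ∉ D → a' σ = 0)
    (h : ∀ v, ∑ σ ∈ C ∪ D, (if v ∈ σ then a σ else 0) = ∑ σ ∈ C ∪ D, if v ∈ σ then a' σ else 0) :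
    a = a' := by
  by_contra hne
  set B := (C ∪ D).filter fun σ => a σ ≠ a' σ with hB
  have hBmem : ∀ σ, a σ ≠ a' σ → σ ∈ B := by
    intro σ hσ
    rw [hB, Finset.mem_filter]
    refine ⟨?_, hσ⟩
    by_contra hn
    rw [Finset.mem_union, not_or] at hn
    exact hσ (by rw [haC σ hn.1, haD σ hn.2])
  obtain ⟨σ₀, hσ₀⟩ := Function.ne_iff.1 hne
  obtain ⟨σ, hσ, hmax⟩ := B.exists_max_image Finset.card ⟨σ₀, hBmem _ hσ₀⟩
  rw [hB, Finset.mem_filter, Finset.mem_union] at hσ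
  have hσne : σ.Nonempty := hσ.1.elim (hCne σ) (hDne σ)
  have hbig : ∀ τ, σ.card < τ.card → a τ = a' τ := fun τ hτ => by
    by_contra hc
    exact absurd (hmax τ (hBmem τ hc)) (not_le.2 hτ)
  refine hσ.2 (le_antisymm (layers_le hD ha ha' haC haD h hσne hbig)
    (layers_le hC ha' ha haD haC (fun v => ?_) hσne fun τ hτ => (hbig τ hτ).symm))
  rw [Finset.union_comm D C]
  exact (h v).symm

/-- Every chain of nonempty subsets of `s` extends to a full flag. -/
lemma exists_flag (s : Finset E) : ∀ C : Finset (Finset E),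
    IsChain (· ⊆ ·) (C : Set (Finset E)) → (∀ σ ∈ C, σ.Nonempty ∧ σ ⊆ s) →
    ∃ D : Finset (Finset E), C ⊆ D ∧ IsChain (· ⊆ ·) (D : Set (Finset E)) ∧
      (∀ σ ∈ D, σ.Nonempty ∧ σ ⊆ s) ∧ D.card = s.card := by
  induction s using Finset.strongInduction with
  | H s ih =>
    intro C hC hCs
    rcases s.eq_empty_or_nonempty with rfl | hne
    · refine ⟨C, subset_rfl, hC, hCs, ?_⟩
      rw [Finset.card_empty, Finset.card_eq_zero, Finset.eq_empty_iff_forall_notMem]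
      intro σ hσ
      exact (hCs σ hσ).1.ne_empty (Finset.subset_empty.1 (hCs σ hσ).2)
    obtain ⟨v, hv, hvC⟩ := exists_mem_notMem hC hne
    obtain ⟨D, hCD, hD, hDs, hcard⟩ := ih (s.erase v) (Finset.erase_ssubset hv) (C.erase s)
      (hC.mono (Finset.coe_subset.2 (Finset.erase_subset _ _))) fun σ hσ => by
        rw [Finset.mem_erase] at hσ
        have h := hCs σ hσ.2
        exact ⟨h.1, Finset.subset_erase.2
          ⟨h.2, hvC σ hσ.2 (Finset.card_le_card h.2) hσ.1⟩⟩
    have hsD : s ∉ D := fun h => Finset.notMem_erase v s ((hDs s h).2 hv)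
    refine ⟨insert s D, fun σ hσ => ?_, ?_, ?_, ?_⟩
    · by_cases h : σ = s
      · exact h ▸ Finset.mem_insert_self _ _
      · exact Finset.mem_insert_of_mem (hCD (Finset.mem_erase.2 ⟨h, hσ⟩))
    · rw [Finset.coe_insert]
      exact hD.insert fun σ hσ _ => Or.inr ((hDs σ hσ).2.trans (Finset.erase_subset _ _))
    · intro σ hσ
      rcases Finset.mem_insert.1 hσ with rfl | hσ
      · exact ⟨hne, subset_rfl⟩
      · exact ⟨(hDs σ hσ).1, (hDs σ hσ).2.trans (Finset.erase_subset _ _)⟩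
    · rw [Finset.card_insert_of_notMem hsD, hcard, Finset.card_erase_add_one hv]

end Chains

/-! ### Uniqueness of barycentric coordinates -/

section Subdivision

variable {E : Type*} [DecidableEq E] [AddCommGroup E] [Module ℝ E]

lemma affineIndependent_finset_iff (s : Finset E) :
    AffineIndependent ℝ ((↑) : s → E) ↔
      ∀ c : E → ℝ, ∑ v ∈ s, c v = 0 → ∑ v ∈ s, c v • v = 0 → ∀ v ∈ s, c v = 0 := by
  rw [affineIndependent_iff_of_fintype]
  constructor
  · intro h c h0 h1 v hv
    have h0' : ∑ i : s, c i = 0 := by rw [Finset.sum_coe_sort s c]; exact h0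
    refine h (fun i => c i) h0' ?_ ⟨v, hv⟩
    rw [Finset.weightedVSub_eq_linear_combination _ h0', Finset.sum_coe_sort s (fun v => c v • v)]
    exact h1
  · intro h w h0 h1 i
    rw [Finset.weightedVSub_eq_linear_combination _ h0] at h1
    have := h (fun v => if hv : v ∈ s then w ⟨v, hv⟩ else 0) ?_ ?_ i i.2
    · simpa using this
    · rw [← Finset.sum_coe_sort, ← h0]; simp
    · rw [← Finset.sum_coe_sort s (fun v => (if hv : v ∈ s then w ⟨v, hv⟩ else 0) • v), ← h1]
      simp

/-- A point of the space of a simplicial complex has only one system of barycentric coordinates;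
stated for nonnegative weights of arbitrary equal totals, extended by zero outside the face. -/
lemma weights_unique (K : Geometry.SimplicialComplex ℝ E) {s t : Finset E}
    (hs : s ∈ K.faces) (ht : t ∈ K.faces) {w w' : E → ℝ}
    (hw : ∀ v, 0 ≤ w v) (hw' : ∀ v, 0 ≤ w' v)
    (hws : ∀ v, v ∉ s → w v = 0) (hwt : ∀ v, v ∉ t → w' v = 0)
    (hsum : ∑ v ∈ s, w v = ∑ v ∈ t, w' v)
    (hx : ∑ v ∈ s, w v • v = ∑ v ∈ t, w' v • v) : w = w' := by
  set S := ∑ v ∈ s, w v with hS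
  have hS0 : 0 ≤ S := Finset.sum_nonneg fun v _ => hw v
  rcases hS0.eq_or_lt with h0 | hpos
  · have h1 := (Finset.sum_eq_zero_iff_of_nonneg fun v _ => hw v).1 (hS.symm.trans h0.symm)
    have h2 := (Finset.sum_eq_zero_iff_of_nonneg fun v _ => hw' v).1 (hsum.symm.trans h0.symm)
    ext v
    have a1 : w v = 0 := by by_cases h : v ∈ s; exacts [h1 v h, hws v h]
    have a2 : w' v = 0 := by by_cases h : v ∈ t; exacts [h2 v h, hwt v h]
    rw [a1, a2]
  · set x := S⁻¹ • ∑ v ∈ s, w v • v with hxd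
    have hxs : x ∈ convexHull ℝ (s : Set E) := by
      rw [Finset.mem_convexHull']
      refine ⟨fun v => S⁻¹ * w v, fun v _ => mul_nonneg (inv_nonneg.2 hS0) (hw v), ?_, ?_⟩
      · rw [← Finset.mul_sum, ← hS, inv_mul_cancel₀ hpos.ne']
      · rw [hxd, Finset.smul_sum]; simp only [mul_smul]
    have hxt : x ∈ convexHull ℝ (t : Set E) := by
      rw [Finset.mem_convexHull']
      refine ⟨fun v => S⁻¹ * w' v, fun v _ => mul_nonneg (inv_nonneg.2 hS0) (hw' v), ?_, ?_⟩
      · rw [← Finset.mul_sum, ← hsum, inv_mul_cancel₀ hpos.ne']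
      · rw [hxd, hx, Finset.smul_sum]; simp only [mul_smul]
    have hxst := K.inter_subset_convexHull hs ht ⟨hxs, hxt⟩
    rw [← Finset.coe_inter, Finset.mem_convexHull'] at hxst
    obtain ⟨u, _, hu1, hux⟩ := hxst
    -- The same argument identifies `w` and `w'` with the weights `S * u` on `s ∩ t`.
    have key : ∀ (r : Finset E) (z : E → ℝ), r ∈ K.faces → s ∩ t ⊆ r → (∀ v, v ∉ r → z v = 0) →
        ∑ v ∈ r, z v = S → ∑ v ∈ r, z v • v = S • x →
        ∀ v, z v = if v ∈ s ∩ t then S * u v else 0 := by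
      intro r z hr hsub hz hz1 hzx v
      by_cases hv : v ∈ r
      · have := (affineIndependent_finset_iff r).1 (K.indep hr)
          (fun v => z v - if v ∈ s ∩ t then S * u v else 0) ?_ ?_ v hv
        · linarith
        · rw [Finset.sum_sub_distrib, Finset.sum_ite_mem, Finset.inter_eq_right.2 hsub,
            ← Finset.mul_sum, hu1, hz1]; ring
        · simp only [sub_smul, ite_smul, zero_smul]
          rw [Finset.sum_sub_distrib, Finset.sum_ite_mem, Finset.inter_eq_right.2 hsub, hzx]
          simp only [mul_smul]
          rw [← Finset.smul_sum, hux, sub_self]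
      · rw [hz v hv, if_neg fun h => hv (hsub h)]
    have hSx : ∑ v ∈ s, w v • v = S • x := by
      rw [hxd, smul_smul, mul_inv_cancel₀ hpos.ne', one_smul]
    ext v
    rw [key s w hs Finset.inter_subset_left hws rfl hSx v,
      key t w' ht Finset.inter_subset_right hwt hsum.symm (hx.symm.trans hSx) v]

/-! ### The barycentric subdivision -/

/-- The barycenter of a finite set of points (with junk value `0` for the empty set). -/
def bary (σ : Finset E) : E := (σ.card : ℝ)⁻¹ • ∑ v ∈ σ, v

lemma card_smul_bary {σ : Finset E} (h : σ.Nonempty) : (σ.card : ℝ) • bary σ = ∑ v ∈ σ, v := by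
  have : (σ.card : ℝ) ≠ 0 := by exact_mod_cast h.card_pos.ne'
  rw [bary, smul_smul, mul_inv_cancel₀ this, one_smul]

/-- A combination of barycenters, written in terms of the vertices of a set containing all the faces
involved. -/
lemma sum_smul_bary {C : Finset (Finset E)} {s : Finset E} (hs : ∀ σ ∈ C, σ ⊆ s)
    (a : Finset E → ℝ) :
    ∑ σ ∈ C, a σ • bary σ = ∑ v ∈ s, (∑ σ ∈ C, if v ∈ σ then a σ * (σ.card : ℝ)⁻¹ else 0) • v := by
  simp only [Finset.sum_smul]
  rw [Finset.sum_comm]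
  refine Finset.sum_congr rfl fun σ hσ => ?_
  simp only [ite_smul, zero_smul]
  rw [Finset.sum_ite_mem, Finset.inter_eq_right.2 (hs σ hσ), bary, smul_smul, Finset.smul_sum]

lemma sum_eq_sum_weights {C : Finset (Finset E)} {s : Finset E} (hs : ∀ σ ∈ C, σ ⊆ s)
    (hne : ∀ σ ∈ C, σ.Nonempty) (a : Finset E → ℝ) :
    ∑ σ ∈ C, a σ = ∑ v ∈ s, ∑ σ ∈ C, if v ∈ σ then a σ * (σ.card : ℝ)⁻¹ else 0 := by
  rw [Finset.sum_comm]
  refine Finset.sum_congr rfl fun σ hσ => ?_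
  have : (σ.card : ℝ) ≠ 0 := by exact_mod_cast (hne σ hσ).card_pos.ne'
  rw [Finset.sum_ite_mem, Finset.inter_eq_right.2 (hs σ hσ), Finset.sum_const, nsmul_eq_mul]
  field_simp

/-- Nonnegative combinations of barycenters of two chains of faces with equal totals and equal
values have the same coefficients: passing to coordinates with respect to the vertices, this is
uniqueness of layer decompositions. -/
lemma bary_unique (K : Geometry.SimplicialComplex ℝ E) {C D : Finset (Finset E)}
    (hC : IsChain (· ⊆ ·) (C : Set (Finset E))) (hD : IsChain (· ⊆ ·) (D : Set (Finset E)))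
    (hCK : ∀ σ ∈ C, σ ∈ K.faces) (hDK : ∀ σ ∈ D, σ ∈ K.faces)
    (hCne : C.Nonempty) (hDne : D.Nonempty)
    {a a' : Finset E → ℝ} (ha : ∀ σ, 0 ≤ a σ) (ha' : ∀ σ, 0 ≤ a' σ)
    (haC : ∀ σ, σ ∉ C → a σ = 0) (haD : ∀ σ, σ ∉ D → a' σ = 0)
    (hsum : ∑ σ ∈ C, a σ = ∑ σ ∈ D, a' σ)
    (hx : ∑ σ ∈ C, a σ • bary σ = ∑ σ ∈ D, a' σ • bary σ) : a = a' := by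
  obtain ⟨s, hs, hsC⟩ := exists_top hC hCne
  obtain ⟨t, ht, htD⟩ := exists_top hD hDne
  have hCn : ∀ σ ∈ C, σ.Nonempty := fun σ h => K.nonempty_of_mem_faces (hCK σ h)
  have hDn : ∀ σ ∈ D, σ.Nonempty := fun σ h => K.nonempty_of_mem_faces (hDK σ h)
  rw [sum_smul_bary hsC, sum_smul_bary htD] at hx
  rw [sum_eq_sum_weights hsC hCn, sum_eq_sum_weights htD hDn] at hsum
  have hw := weights_unique K (hCK s hs) (hDK t ht)
    (w := fun v => ∑ σ ∈ C, if v ∈ σ then a σ * (σ.card : ℝ)⁻¹ else 0)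
    (w' := fun v => ∑ σ ∈ D, if v ∈ σ then a' σ * (σ.card : ℝ)⁻¹ else 0)
    (fun v => Finset.sum_nonneg fun σ _ => by
      split_ifs
      · exact mul_nonneg (ha σ) (by positivity)
      · exact le_rfl)
    (fun v => Finset.sum_nonneg fun σ _ => by
      split_ifs
      · exact mul_nonneg (ha' σ) (by positivity)
      · exact le_rfl)
    (fun v hv => Finset.sum_eq_zero fun σ hσ => if_neg fun h => hv (hsC σ hσ h))
    (fun v hv => Finset.sum_eq_zero fun σ hσ => if_neg fun h => hv (htD σ hσ h)) hsum hx
  have hl := layers_unique hC hD hCn hDn (a := fun σ => a σ * (σ.card : ℝ)⁻¹)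
    (a' := fun σ => a' σ * (σ.card : ℝ)⁻¹)
    (fun σ => mul_nonneg (ha σ) (by positivity)) (fun σ => mul_nonneg (ha' σ) (by positivity))
    (fun σ h => by simp [haC σ h]) (fun σ h => by simp [haD σ h]) (fun v => by
      rw [← Finset.sum_subset (Finset.subset_union_left : C ⊆ C ∪ D) fun σ _ h => by
          simp [haC σ h],
        ← Finset.sum_subset (Finset.subset_union_right : D ⊆ C ∪ D) fun σ _ h => by
          simp [haD σ h]]
      exact congrFun hw v)
  ext σ
  by_cases hσ : σ ∈ C ∪ D
  · have : (σ.card : ℝ) ≠ 0 := by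
      exact_mod_cast ((Finset.mem_union.1 hσ).elim (hCn σ) (hDn σ)).card_pos.ne'
    exact mul_right_cancel₀ (inv_ne_zero this) (congrFun hl σ)
  · rw [Finset.mem_union, not_or] at hσ
    rw [haC σ hσ.1, haD σ hσ.2]

lemma bary_injOn (K : Geometry.SimplicialComplex ℝ E) : Set.InjOn bary K.faces := by
  intro σ hσ τ hτ h
  have := bary_unique K (C := {σ}) (D := {τ}) (by simp) (by simp) (by simpa) (by simpa)
    (by simp) (by simp) (a := Pi.single σ 1) (a' := Pi.single τ 1)
    (fun ρ => by by_cases h : ρ = σ <;> simp [h])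
    (fun ρ => by by_cases h : ρ = τ <;> simp [h])
    (fun ρ h => by simpa [Pi.single_apply] using h) (fun ρ h => by simpa [Pi.single_apply] using h)
    (by simp) (by simpa using h)
  by_contra hne
  have h2 := congrFun this σ
  simp [hne] at h2

/-- The faces of the barycentric subdivision: for each nonempty chain of faces of `K`, the set of
barycenters of its members. -/
def sdFaces (K : Geometry.SimplicialComplex ℝ E) : Set (Finset E) :=
  {t | ∃ C : Finset (Finset E), C.Nonempty ∧ IsChain (· ⊆ ·) (C : Set (Finset E)) ∧
    (∀ σ ∈ C, σ ∈ K.faces) ∧ t = C.image bary}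

/-- Convex weights on the barycenters of a chain, turned into weights on the chain itself. -/
lemma exists_chain_weights (K : Geometry.SimplicialComplex ℝ E) {C : Finset (Finset E)}
    (hCK : ∀ σ ∈ C, σ ∈ K.faces) {x : E}
    (hx : x ∈ convexHull ℝ ((C.image bary : Finset E) : Set E)) :
    ∃ a : Finset E → ℝ, (∀ σ, 0 ≤ a σ) ∧ (∀ σ, σ ∉ C → a σ = 0) ∧ ∑ σ ∈ C, a σ = 1 ∧
      ∑ σ ∈ C, a σ • bary σ = x := by
  have hinj : Set.InjOn bary (C : Set (Finset E)) := (bary_injOn K).mono hCK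
  obtain ⟨w, hw, hw1, hwx⟩ := Finset.mem_convexHull'.1 hx
  rw [Finset.sum_image hinj] at hw1 hwx
  refine ⟨fun σ => if σ ∈ C then w (bary σ) else 0, fun σ => ?_, fun σ h => if_neg h, ?_, ?_⟩
  · dsimp only
    split_ifs with h
    · exact hw _ (Finset.mem_image_of_mem _ h)
    · exact le_rfl
  · rw [← hw1]; exact Finset.sum_congr rfl fun σ h => if_pos h
  · rw [← hwx]; exact Finset.sum_congr rfl fun σ h => by simp only [if_pos h]

/-- The barycentric subdivision of a geometric simplicial complex. -/
def sd (K : Geometry.SimplicialComplex ℝ E) : Geometry.SimplicialComplex ℝ E where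
  faces := sdFaces K
  isRelLowerSet_faces := by
    rintro t ⟨C, hne, hC, hCK, rfl⟩
    refine ⟨hne.image _, fun t' ht' hne' => ?_⟩
    obtain ⟨C', hC', rfl⟩ := Finset.subset_image_iff.1 ht'
    exact ⟨C', Finset.image_nonempty.1 hne', hC.mono hC', fun σ h => hCK σ (hC' h), rfl⟩
  indep := by
    rintro t ⟨C, hne, hC, hCK, rfl⟩
    have hinj : Set.InjOn bary (C : Set (Finset E)) := (bary_injOn K).mono hCK
    rw [affineIndependent_finset_iff]
    intro c h0 h1 v hv
    rw [Finset.sum_image hinj] at h0 h1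
    -- Compare the positive and the negative part of the given relation.
    have := bary_unique K hC hC hCK hCK hne hne
      (a := fun σ => if σ ∈ C then (c (bary σ))⁺ else 0)
      (a' := fun σ => if σ ∈ C then (c (bary σ))⁻ else 0)
      (fun σ => by split_ifs; exacts [posPart_nonneg _, le_rfl])
      (fun σ => by split_ifs; exacts [negPart_nonneg _, le_rfl])
      (fun σ h => if_neg h) (fun σ h => if_neg h) ?_ ?_
    · obtain ⟨σ, hσ, rfl⟩ := Finset.mem_image.1 hv
      have h2 := congrFun this σ
      simp only [if_pos hσ] at h2
      rw [← posPart_sub_negPart (c (bary σ)), h2, sub_self]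
    · rw [← sub_eq_zero, ← Finset.sum_sub_distrib, ← h0]
      refine Finset.sum_congr rfl fun σ hσ => ?_
      rw [if_pos hσ, if_pos hσ, posPart_sub_negPart]
    · rw [← sub_eq_zero, ← Finset.sum_sub_distrib, ← h1]
      refine Finset.sum_congr rfl fun σ hσ => ?_
      rw [if_pos hσ, if_pos hσ, ← sub_smul, posPart_sub_negPart]
  inter_subset_convexHull := by
    rintro _ _ ⟨C, hne, hC, hCK, rfl⟩ ⟨D, hneD, hD, hDK, rfl⟩ x ⟨hxC, hxD⟩
    obtain ⟨a, ha, haC, ha1, hax⟩ := exists_chain_weights K hCK hxC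
    obtain ⟨a', ha', haD, ha1', hax'⟩ := exists_chain_weights K hDK hxD
    have heq := bary_unique K hC hD hCK hDK hne hneD ha ha' haC haD (ha1.trans ha1'.symm)
      (hax.trans hax'.symm)
    have hz : ∀ σ ∈ C, σ ∉ C ∩ D → a σ = 0 := fun σ hσ h => by
      rw [heq]
      exact haD σ fun hd => h (Finset.mem_inter.2 ⟨hσ, hd⟩)
    rw [← hax, ← Finset.sum_subset (Finset.inter_subset_left : C ∩ D ⊆ C) fun σ hσ h => by
      rw [hz σ hσ h, zero_smul]]
    refine (convex_convexHull ℝ _).sum_mem (fun σ _ => ha σ) ?_ fun σ hσ => subset_convexHull _ _ ?_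
    · rw [← ha1]
      exact Finset.sum_subset Finset.inter_subset_left hz
    · rw [Finset.mem_inter] at hσ
      exact ⟨Finset.mem_image_of_mem _ hσ.1, Finset.mem_image_of_mem _ hσ.2⟩

/-- Existence of layer decompositions: subtract the smallest coefficient from all coordinates and
proceed with the points whose coordinate is still positive. -/
lemma exists_layers (s : Finset E) : ∀ w : E → ℝ, (∀ v ∈ s, 0 ≤ w v) →
    ∃ (C : Finset (Finset E)) (a : Finset E → ℝ), IsChain (· ⊆ ·) (C : Set (Finset E)) ∧
      (∀ σ ∈ C, σ.Nonempty ∧ σ ⊆ s) ∧ (∀ σ ∈ C, 0 ≤ a σ) ∧ ∑ σ ∈ C, a σ = ∑ v ∈ s, w v ∧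
      ∑ σ ∈ C, a σ • bary σ = ∑ v ∈ s, w v • v := by
  induction s using Finset.strongInduction with
  | H s ih =>
    intro w hw
    rcases s.eq_empty_or_nonempty with rfl | hne
    · exact ⟨∅, 0, by simp⟩
    obtain ⟨v₀, hv₀, hmin⟩ := s.exists_min_image w hne
    obtain ⟨C, a, hC, hCs, ha, ha1, hax⟩ := ih (s.erase v₀) (Finset.erase_ssubset hv₀)
      (fun v => w v - w v₀) fun v hv => sub_nonneg.2 (hmin v (Finset.mem_of_mem_erase hv))
    have hsC : s ∉ C := fun h => Finset.notMem_erase v₀ s ((hCs s h).2 hv₀)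
    have hne' : ∀ σ ∈ C, σ ≠ s := fun σ hσ h => hsC (h ▸ hσ)
    refine ⟨insert s C, fun σ => if σ = s then w v₀ * s.card else a σ, ?_, ?_, ?_, ?_, ?_⟩
    · rw [Finset.coe_insert]
      exact hC.insert fun σ hσ _ => Or.inr ((hCs σ hσ).2.trans (Finset.erase_subset _ _))
    · intro σ hσ
      rcases Finset.mem_insert.1 hσ with rfl | hσ
      · exact ⟨hne, subset_rfl⟩
      · exact ⟨(hCs σ hσ).1, (hCs σ hσ).2.trans (Finset.erase_subset _ _)⟩
    · intro σ hσ
      dsimp only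
      split_ifs with h
      · exact mul_nonneg (hw v₀ hv₀) (by positivity)
      · exact ha σ ((Finset.mem_insert.1 hσ).resolve_left h)
    · rw [Finset.sum_insert hsC, if_pos rfl,
        Finset.sum_congr rfl fun σ hσ => if_neg (hne' σ hσ), ha1,
        Finset.sum_erase s (f := fun v => w v - w v₀) (sub_self _), Finset.sum_sub_distrib, Finset.sum_const, nsmul_eq_mul]
      ring
    · have hcongr : ∑ σ ∈ C, (if σ = s then w v₀ * s.card else a σ) • bary σ =
          ∑ σ ∈ C, a σ • bary σ := Finset.sum_congr rfl fun σ hσ => by rw [if_neg (hne' σ hσ)]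
      simp only [Finset.sum_insert hsC, if_true]
      rw [hcongr, hax, Finset.sum_erase s (f := fun v => (w v - w v₀) • v)
        (by rw [sub_self, zero_smul]), mul_smul, card_smul_bary hne,
        Finset.smul_sum, ← Finset.sum_add_distrib]
      refine Finset.sum_congr rfl fun v _ => ?_
      rw [← add_smul]; congr 1; ring

lemma bary_mem_convexHull {σ : Finset E} (h : σ.Nonempty) : bary σ ∈ convexHull ℝ (σ : Set E) := by
  have : (σ.card : ℝ) ≠ 0 := by exact_mod_cast h.card_pos.ne'
  rw [bary, Finset.smul_sum]
  refine (convex_convexHull ℝ _).sum_mem (fun _ _ => by positivity) ?_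
    fun v hv => subset_convexHull _ _ hv
  rw [Finset.sum_const, nsmul_eq_mul, mul_inv_cancel₀ this]

lemma sd_space (K : Geometry.SimplicialComplex ℝ E) : (sd K).space = K.space := by
  ext x
  rw [Geometry.SimplicialComplex.mem_space_iff, Geometry.SimplicialComplex.mem_space_iff]
  constructor
  · rintro ⟨_, ⟨C, hne, hC, hCK, rfl⟩, hx⟩
    obtain ⟨s, hs, hsC⟩ := exists_top hC hne
    refine ⟨s, hCK s hs, convexHull_min ?_ (convex_convexHull ℝ _) hx⟩
    intro y hy
    obtain ⟨σ, hσ, rfl⟩ := Finset.mem_image.1 hy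
    exact convexHull_mono (Finset.coe_subset.2 (hsC σ hσ))
      (bary_mem_convexHull (K.nonempty_of_mem_faces (hCK σ hσ)))
  · rintro ⟨s, hs, hx⟩
    obtain ⟨w, hw, hw1, hwx⟩ := Finset.mem_convexHull'.1 hx
    obtain ⟨C, a, hC, hCs, ha, ha1, hax⟩ := exists_layers s w hw
    refine ⟨C.image bary, ⟨C, ?_, hC, fun σ hσ => K.down_closed hs (hCs σ hσ).2 (hCs σ hσ).1, rfl⟩,
      ?_⟩
    · rw [Finset.nonempty_iff_ne_empty]
      rintro rfl
      rw [hw1] at ha1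
      simp at ha1
    · rw [← hwx, ← hax]
      exact (convex_convexHull ℝ _).sum_mem ha (ha1.trans hw1)
        fun σ hσ => subset_convexHull _ _ (Finset.mem_image_of_mem _ hσ)

lemma sd_finite (K : Geometry.SimplicialComplex ℝ E) (h : K.faces.Finite) :
    (sd K).faces.Finite := by
  refine ((h.toFinset.powerset.image fun C => C.image bary).finite_toSet).subset ?_
  rintro t ⟨C, _, _, hCK, rfl⟩
  refine Finset.mem_coe.2 (Finset.mem_image_of_mem _ (Finset.mem_powerset.2 fun σ hσ => ?_))
  exact h.mem_toFinset.2 (hCK σ hσ)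

lemma sd_pure (K : Geometry.SimplicialComplex ℝ E) {n : ℕ}
    (h : ∀ σ ∈ K.faces, ∃ τ ∈ K.faces, σ ⊆ τ ∧ τ.card = n) :
    ∀ σ ∈ (sd K).faces, ∃ τ ∈ (sd K).faces, σ ⊆ τ ∧ τ.card = n := by
  rintro _ ⟨C, hne, hC, hCK, rfl⟩
  obtain ⟨s, hs, hsC⟩ := exists_top hC hne
  obtain ⟨t, ht, hst, htn⟩ := h s (hCK s hs)
  obtain ⟨D, hCD, hD, hDt, hcard⟩ := exists_flag t C hC fun σ hσ =>
    ⟨K.nonempty_of_mem_faces (hCK σ hσ), (hsC σ hσ).trans hst⟩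
  have hDK : ∀ σ ∈ D, σ ∈ K.faces := fun σ hσ => K.down_closed ht (hDt σ hσ).2 (hDt σ hσ).1
  refine ⟨D.image bary, ⟨D, hne.mono hCD, hD, hDK, rfl⟩, Finset.image_subset_image hCD, ?_⟩
  rw [Finset.card_image_of_injOn ((bary_injOn K).mono hDK), hcard, htn]

lemma bary_image {f : E →ₗ[ℝ] E} (hf : Function.Injective f) (σ : Finset E) :
    bary (σ.image f) = f (bary σ) := by
  rw [bary, bary, Finset.card_image_of_injective σ hf, Finset.sum_image hf.injOn, map_smul, map_sum]

/-- The barycentric subdivision inherits the linear symmetries of the complex. -/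
lemma sd_image (K : Geometry.SimplicialComplex ℝ E) {f : E →ₗ[ℝ] E} (hf : Function.Injective f)
    (h : ∀ σ ∈ K.faces, σ.image f ∈ K.faces) :
    ∀ σ ∈ (sd K).faces, σ.image f ∈ (sd K).faces := by
  rintro _ ⟨C, hne, hC, hCK, rfl⟩
  refine ⟨C.image fun σ => σ.image f, hne.image _, ?_, ?_, ?_⟩
  · rw [Finset.coe_image]
    exact hC.image_of_map_rel _ _ _ fun _ _ h => Finset.image_subset_image h
  · intro σ hσ
    obtain ⟨τ, hτ, rfl⟩ := Finset.mem_image.1 hσ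
    exact h τ (hCK τ hτ)
  · rw [Finset.image_image, Finset.image_image]
    exact Finset.image_congr fun σ _ => (bary_image hf σ).symm

/-- Adjacent vertices of the subdivision are the barycenters of nested faces. -/
lemma exists_of_pair_mem_sd (K : Geometry.SimplicialComplex ℝ E) {u v : E}
    (h : ({u, v} : Finset E) ∈ (sd K).faces) :
    ∃ σ ∈ K.faces, ∃ τ ∈ K.faces, bary σ = u ∧ bary τ = v ∧ (σ ⊆ τ ∨ τ ⊆ σ) := by
  obtain ⟨C, _, hC, hCK, hC'⟩ := h
  obtain ⟨σ, hσ, hu⟩ := Finset.mem_image.1 (hC' ▸ Finset.mem_insert_self u {v})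
  obtain ⟨τ, hτ, hv⟩ := Finset.mem_image.1
    (hC' ▸ Finset.mem_insert_of_mem (Finset.mem_singleton_self v))
  exact ⟨σ, hCK σ hσ, τ, hCK τ hτ, hu, hv, hC.total hσ hτ⟩

end Subdivision

/-! ### Mesh size -/

section Mesh

variable {E : Type*} [DecidableEq E] [NormedAddCommGroup E] [NormedSpace ℝ E]

/-- If `u ∈ τ`, the vector from `u` to the barycenter of `τ` is the average over `v ∈ τ` of `v - u`,
and the term `v = u` vanishes; this gives the contraction factor. -/
lemma dist_bary_le {σ τ : Finset E} (hσ : σ.Nonempty) (hst : σ ⊆ τ) {n : ℕ}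
    (hn : τ.card ≤ n) {d : ℝ} (hd : ∀ u ∈ τ, ∀ v ∈ τ, dist u v ≤ d) :
    dist (bary σ) (bary τ) ≤ (1 - (n : ℝ)⁻¹) * d := by
  have hτ := hσ.mono hst
  have hpos : (0 : ℝ) < τ.card := by exact_mod_cast hτ.card_pos
  have hd0 : 0 ≤ d := by
    obtain ⟨u, hu⟩ := hτ
    exact dist_nonneg.trans (hd u hu u hu)
  have hball : (σ : Set E) ⊆ Metric.closedBall (bary τ) ((1 - (n : ℝ)⁻¹) * d) := by
    intro u hu
    have hu' : u ∈ τ := hst hu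
    rw [Metric.mem_closedBall, dist_comm, dist_eq_norm]
    have heq : bary τ - u = (τ.card : ℝ)⁻¹ • ∑ v ∈ τ.erase u, (v - u) := by
      rw [Finset.sum_erase τ (f := fun v => v - u) (sub_self u), Finset.sum_sub_distrib, Finset.sum_const, smul_sub,
        ← Nat.cast_smul_eq_nsmul ℝ, smul_smul, inv_mul_cancel₀ hpos.ne', one_smul, bary]
    have hle : ‖∑ v ∈ τ.erase u, (v - u)‖ ≤ (τ.card - 1 : ℝ) * d := by
      refine (norm_sum_le_of_le _ fun v hv => ?_).trans_eq (?_ : ∑ v ∈ τ.erase u, d = _)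
      · rw [← dist_eq_norm]; exact hd v (Finset.mem_of_mem_erase hv) u hu'
      · rw [Finset.sum_const, nsmul_eq_mul, Finset.cast_card_erase_of_mem hu']
    rw [heq, norm_smul, norm_inv, Real.norm_natCast]
    calc (τ.card : ℝ)⁻¹ * ‖∑ v ∈ τ.erase u, (v - u)‖
        ≤ (τ.card : ℝ)⁻¹ * ((τ.card - 1 : ℝ) * d) := by gcongr
      _ = (1 - (τ.card : ℝ)⁻¹) * d := by field_simp
      _ ≤ (1 - (n : ℝ)⁻¹) * d := by gcongr
  have := convexHull_min hball (convex_closedBall _ _) (bary_mem_convexHull hσ)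
  exact this

lemma sd_mesh (K : Geometry.SimplicialComplex ℝ E) {n : ℕ} (hn : ∀ σ ∈ K.faces, σ.card ≤ n)
    {d : ℝ} (hd : ∀ σ ∈ K.faces, ∀ u ∈ σ, ∀ v ∈ σ, dist u v ≤ d) :
    ∀ σ ∈ (sd K).faces, ∀ u ∈ σ, ∀ v ∈ σ, dist u v ≤ (1 - (n : ℝ)⁻¹) * d := by
  rintro _ ⟨C, hne, hC, hCK, rfl⟩ _ hu _ hv
  obtain ⟨σ, hσ, rfl⟩ := Finset.mem_image.1 hu
  obtain ⟨τ, hτ, rfl⟩ := Finset.mem_image.1 hv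
  rcases hC.total hσ hτ with h | h
  · exact dist_bary_le (K.nonempty_of_mem_faces (hCK σ hσ)) h (hn τ (hCK τ hτ)) (hd τ (hCK τ hτ))
  · rw [dist_comm]
    exact dist_bary_le (K.nonempty_of_mem_faces (hCK τ hτ)) h (hn σ (hCK σ hσ)) (hd σ (hCK σ hσ))

end Mesh

/-! ### Subdividing the standard simplex -/

namespace Triangulation

variable {n : ℕ}

lemma card_le_s8 (T : Triangulation n) : ∀ σ ∈ T.complex.faces, σ.card ≤ n := fun σ hσ => by
  obtain ⟨τ, _, hsub, hτ⟩ := T.pure σ hσ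
  exact (Finset.card_le_card hsub).trans_eq hτ

/-- The barycentric subdivision of a triangulation of the standard simplex. -/
def subdiv (T : Triangulation n) : Triangulation n where
  complex := sd T.complex
  finite := sd_finite _ T.finite
  space_eq := (sd_space _).trans T.space_eq
  pure := sd_pure _ T.pure

/-- The standard simplex with all its faces, as a triangulation of itself. -/
def standard (n : ℕ) [NeZero n] : Triangulation n where
  complex :=
    { faces := {σ | σ.Nonempty ∧ σ ⊆ Finset.univ.image fun i : Fin n => (Pi.single i 1 : Fin n → ℝ)}
      isRelLowerSet_faces := fun σ hσ => ⟨hσ.1, fun τ hτ hne => ⟨hne, hτ.trans hσ.2⟩⟩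
      indep := by
        rintro σ ⟨_, hσ⟩
        have h := ((Pi.basisFun ℝ (Fin n)).linearIndependent.affineIndependent).range
        refine h.mono fun x hx => ?_
        simpa using hσ hx
      inter_subset_convexHull := by
        rintro σ τ ⟨_, hσ⟩ ⟨_, hτ⟩
        have h := ((Pi.basisFun ℝ (Fin n)).linearIndependent.affineIndependent).range
        apply subset_of_eq
        rw [AffineIndependent.convexHull_inter (R := ℝ) (s := σ ∪ τ) (h.mono fun x hx => ?_)
          Finset.subset_union_left Finset.subset_union_right]
        simpa using Finset.union_subset hσ hτ hx }
  finite := (Finset.finite_toSet (Finset.powerset _)).subset fun σ hσ =>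
    Finset.mem_coe.2 (Finset.mem_powerset.2 hσ.2)
  space_eq := by
    rw [← convexHull_rangle_single_eq_stdSimplex]
    ext x
    rw [Geometry.SimplicialComplex.mem_space_iff]
    constructor
    · rintro ⟨σ, ⟨_, hσ⟩, hx⟩
      exact convexHull_mono (fun y hy => by simpa using hσ hy) hx
    · intro hx
      exact ⟨_, ⟨Finset.univ_nonempty.image _, subset_rfl⟩, by simpa using hx⟩
  pure := fun σ hσ => ⟨_, ⟨Finset.univ_nonempty.image _, subset_rfl⟩, hσ.2, by
    rw [Finset.card_image_of_injective _ fun i j h => by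
      simpa [Pi.single_apply] using congrFun h i]
    simp⟩

end Triangulation

/-- `rmap` as a linear map. -/
def rmapLin {n : ℕ} (j : Fin n) : (Fin n → ℝ) →ₗ[ℝ] (Fin n → ℝ) :=
  LinearMap.funLeft ℝ ℝ (rho j).symm

lemma coe_rmapLin {n : ℕ} (j : Fin n) : ⇑(rmapLin j) = rmap j := rfl

lemma rmapLin_injective {n : ℕ} (j : Fin n) : Function.Injective (rmapLin j) :=
  LinearMap.funLeft_injective_of_surjective ℝ ℝ _ (rho j).symm.surjective

/-- Arbitrarily fine triangulations of the standard simplex that are invariant under all the maps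
`rmap j`, obtained by iterated barycentric subdivision. -/
lemma exists_fine (n : ℕ) [NeZero n] (k : ℕ) : ∃ T : Triangulation n,
    (∀ j, ∀ σ ∈ T.complex.faces, σ.image (rmapLin j) ∈ T.complex.faces) ∧
    ∀ σ ∈ T.complex.faces, ∀ u ∈ σ, ∀ v ∈ σ, dist u v ≤ (1 - (n : ℝ)⁻¹) ^ k * 1 := by
  induction k with
  | zero =>
    refine ⟨Triangulation.standard n, ?_, ?_⟩
    · rintro j σ ⟨hne, hσ⟩
      refine ⟨hne.image _, fun x hx => ?_⟩
      obtain ⟨y, hy, rfl⟩ := Finset.mem_image.1 hx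
      obtain ⟨i, _, rfl⟩ := Finset.mem_image.1 (hσ hy)
      refine Finset.mem_image.2 ⟨rho j i, Finset.mem_univ _, ?_⟩
      ext l
      rw [coe_rmapLin]
      simp only [rmap, Pi.single_apply, Equiv.symm_apply_eq]
    · rintro σ ⟨-, hσ⟩ u hu v hv
      obtain ⟨i, -, rfl⟩ := Finset.mem_image.1 (hσ hu)
      obtain ⟨l, -, rfl⟩ := Finset.mem_image.1 (hσ hv)
      rw [pow_zero, one_mul, dist_pi_le_iff zero_le_one]
      intro m
      simp only [Pi.single_apply]
      split_ifs <;> simp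
  | succ k ih =>
    obtain ⟨T, hT, hd⟩ := ih
    refine ⟨T.subdiv, fun j => sd_image _ (rmapLin_injective j) (hT j), ?_⟩
    rw [pow_succ', mul_assoc]
    exact sd_mesh _ T.card_le_s8 hd

/-- For points with nonnegative coordinates, the support of the barycenter grows with the set. -/
lemma supp_bary_subset {n : ℕ} {σ τ : Finset (Fin n → ℝ)} (hτ : τ.Nonempty)
    (hpos : ∀ v ∈ τ, ∀ i, 0 ≤ v i) (h : σ ⊆ τ) :
    {i | bary σ i ≠ 0} ⊆ {i | bary τ i ≠ 0} := by
  intro i hi h0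
  have hc : (τ.card : ℝ)⁻¹ ≠ 0 := inv_ne_zero (by exact_mod_cast hτ.card_pos.ne')
  simp only [bary, Pi.smul_apply, Finset.sum_apply, smul_eq_mul, mul_eq_zero, hc, false_or] at h0
  rw [Finset.sum_eq_zero_iff_of_nonneg fun v hv => hpos v hv i] at h0
  refine hi ?_
  rw [bary, Pi.smul_apply, Finset.sum_apply, Finset.sum_eq_zero fun v hv => h0 v (h hv), smul_zero]

/-- For every n ≥ 1 and ε > 0, there is a nice triangulation of Δ^{n-1} all of whose
simplices have diameter less than ε, in which the supporting faces of adjacent vertices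
are comparable by inclusion, together with an owner-labeling `o` of its vertices that is
invariant under the symmetries r^j on the 1̂-facet and gives distinct labels to
adjacent vertices. -/
theorem exists_nice_triangulation (n : ℕ) [NeZero n] (ε : ℝ) (hε : 0 < ε) :
    ∃ (T : Triangulation n) (o : (Fin n → ℝ) → Fin n),
      T.IsNice ∧
      (∀ σ ∈ T.complex.faces, Metric.diam (convexHull ℝ (σ : Set (Fin n → ℝ))) < ε) ∧
      (∀ u v : Fin n → ℝ, ({u, v} : Finset (Fin n → ℝ)) ∈ T.complex.faces →
        {i | u i ≠ 0} ⊆ {i | v i ≠ 0} ∨ {i | v i ≠ 0} ⊆ {i | u i ≠ 0}) ∧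
      (∀ j : Fin n, ∀ v ∈ T.complex.vertices, v 0 = 0 → o (rmap j v) = o v) ∧
      (∀ u v : Fin n → ℝ, u ≠ v → ({u, v} : Finset (Fin n → ℝ)) ∈ T.complex.faces →
        o u ≠ o v) := by
  have hn : (1 : ℝ) ≤ n := by exact_mod_cast NeZero.one_le
  have hq0 : 0 ≤ 1 - (n : ℝ)⁻¹ := sub_nonneg.2 (inv_le_one_of_one_le₀ hn)
  have hq1 : 1 - (n : ℝ)⁻¹ < 1 := sub_lt_self _ (by positivity)
  obtain ⟨k, hk⟩ := exists_pow_lt_of_lt_one hε hq1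
  obtain ⟨T, hT, hd⟩ := exists_fine n k
  -- The label of the barycenter of a face is the dimension of that face.
  let o : (Fin n → ℝ) → Fin n := fun v =>
    if h : ∃ σ ∈ T.complex.faces, bary σ = v then Fin.ofNat n (h.choose.card - 1) else 0
  have ho : ∀ σ ∈ T.complex.faces, o (bary σ) = Fin.ofNat n (σ.card - 1) := by
    intro σ hσ
    have h : ∃ τ ∈ T.complex.faces, bary τ = bary σ := ⟨σ, hσ, rfl⟩
    have h' : h.choose = σ := bary_injOn _ h.choose_spec.1 hσ h.choose_spec.2
    simp only [o, dif_pos h, h']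
  refine ⟨T.subdiv, o, ?_, ?_, ?_, ?_, ?_⟩
  · intro j σ hσ _
    exact sd_image _ (rmapLin_injective j) (hT j) σ hσ
  · intro σ hσ
    rw [convexHull_diam]
    refine (Metric.diam_le_of_forall_dist_le (pow_nonneg hq0 k) fun u hu v hv => ?_).trans_lt hk
    refine (sd_mesh _ T.card_le_s8 hd σ hσ u hu v hv).trans ?_
    rw [mul_one]
    exact mul_le_of_le_one_left (pow_nonneg hq0 k) hq1.le
  · intro u v huv
    have hpos : ∀ σ ∈ T.complex.faces, ∀ w ∈ σ, ∀ i, 0 ≤ w i := fun σ hσ w hw => by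
      have h := T.complex.subset_space hσ hw
      rw [T.space_eq] at h
      exact h.1
    obtain ⟨σ, hσ, τ, hτ, rfl, rfl, h⟩ := exists_of_pair_mem_sd _ huv
    exact h.imp (supp_bary_subset (T.complex.nonempty_of_mem_faces hτ) (hpos τ hτ))
      (supp_bary_subset (T.complex.nonempty_of_mem_faces hσ) (hpos σ hσ))
  · intro j v hv _
    have hv' : ({v, v} : Finset (Fin n → ℝ)) ∈ (sd T.complex).faces := by
      rw [Finset.pair_eq_singleton]; exact hv
    obtain ⟨σ, hσ, -, -, rfl, -⟩ := exists_of_pair_mem_sd _ hv'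
    rw [← coe_rmapLin, ← bary_image (rmapLin_injective j), ho _ (hT j σ hσ), ho σ hσ,
      Finset.card_image_of_injective _ (rmapLin_injective j)]
  · intro u v huv hadj heq
    obtain ⟨σ, hσ, τ, hτ, rfl, rfl, h⟩ := exists_of_pair_mem_sd _ hadj
    rw [ho σ hσ, ho τ hτ, Fin.ext_iff, Fin.val_ofNat, Fin.val_ofNat] at heq
    have h1 := (T.complex.nonempty_of_mem_faces hσ).card_pos
    have h2 := (T.complex.nonempty_of_mem_faces hτ).card_pos
    have h3 := T.card_le_s8 σ hσ
    have h4 := T.card_le_s8 τ hτ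
    rw [Nat.mod_eq_of_lt (by omega), Nat.mod_eq_of_lt (by omega)] at heq
    have hcard : σ.card = τ.card := by omega
    refine huv (congrArg bary ?_)
    exact h.elim (fun h => Finset.eq_of_subset_of_card_le h hcard.ge)
      fun h => (Finset.eq_of_subset_of_card_le h hcard.le).symm
end
end
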